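/- arXiv:2004.05206 — 2 statements merged into one kernel-verified Lean document; each statement's English description precedes it below -/
import Mathlib

section
/- Let X be a GT space and let (x_n)_{n∈ℕ} together with (x_n*)_{n∈ℕ} be a basis of X with the bounded restricted truncation operator property. Let (s_m)_{m≥1} be a sequence of positive numbers such that s_m ≤ K·φ_l(m) for all m and some constant K. Then there is a constant C such that for every m ≥ 1, m·( Σ_{n=1}^m s_n^{−2} )^{−1/2} ≤ C·φ_l(m). -/
open scoped BigOperators ENNReal

/-- `X` is a GT space: every bounded operator into `ℓ_2` is absolutely summing,
with the absolutely summing norm controlled by `D·‖T‖`. -/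
def IsGTSpace (X : Type*) [NormedAddCommGroup X] [NormedSpace ℝ X] : Prop :=
  ∃ D : ℝ, ∀ T : X →L[ℝ] lp (fun _ : ℕ => ℝ) 2, ∀ (B : Finset ℕ) (f : ℕ → X),
    ∃ ε : ℕ → ℝ, (∀ k, ε k = 1 ∨ ε k = -1) ∧
      ∑ k ∈ B, ‖T (f k)‖ ≤ D * ‖T‖ * ‖∑ k ∈ B, ε k • f k‖

/-- `A` is a greedy set for the coefficient sequence `coef`. -/
def GreedySet (coef : ℕ → ℝ) (A : Finset ℕ) : Prop :=
  ∀ n ∈ A, ∀ k ∉ A, |coef k| ≤ |coef n|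

/-- `(x_n)` together with bounded linear functionals `(x_n^*)` is a
(semi-normalized, fundamental, M-bounded Markushevich) basis of `X`. -/
structure IsXBasis {X : Type*} [NormedAddCommGroup X] [NormedSpace ℝ X]
    (x : ℕ → X) (xs : ℕ → X →L[ℝ] ℝ) : Prop where
  biorth : ∀ m n, xs m (x n) = if m = n then (1 : ℝ) else 0
  dense : ∀ f : X, ∀ ε > 0, ∃ (A : Finset ℕ) (c : ℕ → ℝ), ‖f - ∑ n ∈ A, c n • x n‖ < ε
  norm_lb : ∃ c > 0, ∀ n, c ≤ ‖x n‖
  norm_ub : ∃ C : ℝ, ∀ n, ‖x n‖ ≤ C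
  dual_ub : ∃ b : ℝ, ∀ n, ‖xs n‖ ≤ b

/-- The sign function, with the convention `sgn 0 = 1`. -/
noncomputable def sgn (a : ℝ) : ℝ := if a = 0 then 1 else a / |a|

/-- The basis has the bounded restricted truncation operator property:
`‖U(f,A)‖ ≤ C₀·‖f‖` for every greedy set `A` of `f`, where
`U(f,A) = (min_{n∈A} |x_n^*(f)|)·∑_{n∈A} sgn(x_n^*(f))·x_n`. -/
def BRTP {X : Type*} [NormedAddCommGroup X] [NormedSpace ℝ X]
    (x : ℕ → X) (xs : ℕ → X →L[ℝ] ℝ) : Prop :=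
  ∃ C₀ ≥ (1 : ℝ), ∀ (f : X) (A : Finset ℕ) (h : A.Nonempty),
    GreedySet (fun n => xs n f) A →
    ‖(A.inf' h fun n => |xs n f|) • ∑ n ∈ A, sgn (xs n f) • x n‖ ≤ C₀ * ‖f‖

/-- The basis is quasi-greedy: greedy projections are uniformly bounded. -/
def QuasiGreedyX {X : Type*} [NormedAddCommGroup X] [NormedSpace ℝ X]
    (x : ℕ → X) (xs : ℕ → X →L[ℝ] ℝ) : Prop :=
  ∃ C₀ ≥ (1 : ℝ), ∀ (f : X) (A : Finset ℕ), GreedySet (fun n => xs n f) A →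
    ‖∑ n ∈ A, xs n f • x n‖ ≤ C₀ * ‖f‖

/-!
The truncation property makes the norms `‖∑_{n∈A} ε_n x_n‖` comparable for all choices of signs,
and bounds `|x_k^*(f)| φ_l(|A|)` by a multiple of `‖f‖` whenever `|x_k^*(f)|` is the least
coefficient of `f` on `A`. With `s ≤ K φ_l`, the `j`-th largest coefficient of `f` is thus at most
`M ‖f‖ / s_j`, so for `|A| = m` the operator `f ↦ (x_n^*(f))_{n∈A}` into `ℓ_2` has norm at most
`M (∑_{j≤m} s_j⁻²)^(1/2)`. It maps each `x_n` with `n ∈ A` to a unit vector, so the GT property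
applied to `(x_n)_{n∈A}` bounds `m` by this norm times a multiple of `‖∑_{n∈A} ε_n x_n‖` for some
signs.
-/

theorem abs_sgn (a : ℝ) : |sgn a| = 1 := by
  by_cases h : a = 0 <;> simp [sgn, h, abs_div]

theorem sgn_eq_self {a : ℝ} (ha : |a| = 1) : sgn a = a := by
  have h : a ≠ 0 := by
    rintro rfl
    simp at ha
  simp [sgn, h, ha]

theorem sum_le_sum_Icc_of_forall_exists_le {ι M : Type*} [AddCommMonoid M] [PartialOrder M]
    [IsOrderedAddMonoid M] {a : ι → M} {w : ℕ → M} (A : Finset ι)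
    (h : ∀ B ⊆ A, B.Nonempty → ∃ k ∈ B, a k ≤ w B.card) :
    ∑ n ∈ A, a n ≤ ∑ j ∈ Finset.Icc 1 A.card, w j := by
  classical
  induction hm : A.card generalizing A with
  | zero => simp [Finset.card_eq_zero.1 hm]
  | succ m ih =>
    obtain ⟨k, hk, hak⟩ := h A subset_rfl (Finset.card_pos.1 (by lia))
    have herase : ∑ n ∈ A.erase k, a n ≤ ∑ j ∈ Finset.Icc 1 m, w j :=
      ih (A.erase k) (fun B hB ↦ h B (hB.trans (A.erase_subset k)))
        (by rw [Finset.card_erase_of_mem hk, hm, Nat.add_sub_cancel])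
    rw [← Finset.sum_erase_add A a hk, Finset.sum_Icc_succ_top (by lia)]
    exact add_le_add herase (hm ▸ hak)

theorem sqrt_sum_sq_le_of_forall_exists_mul_le {ι : Type*} {c : ι → ℝ} {s : ℕ → ℝ}
    (hs : ∀ m, 1 ≤ m → 0 < s m) {M : ℝ} (hM : 0 ≤ M) (A : Finset ι)
    (h : ∀ B ⊆ A, B.Nonempty → ∃ k ∈ B, |c k| * s B.card ≤ M) :
    √(∑ n ∈ A, c n ^ 2) ≤ M * √(∑ j ∈ Finset.Icc 1 A.card, (s j)⁻¹ ^ 2) := by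
  have hsum : ∑ n ∈ A, c n ^ 2 ≤ ∑ j ∈ Finset.Icc 1 A.card, (M * (s j)⁻¹) ^ 2 := by
    refine sum_le_sum_Icc_of_forall_exists_le A fun B hBA hB ↦ ?_
    obtain ⟨k, hk, hck⟩ := h B hBA hB
    have hle : |c k| ≤ M * (s B.card)⁻¹ := (le_mul_inv_iff₀ (hs _ (Finset.card_pos.2 hB))).2 hck
    exact ⟨k, hk, sq_le_sq.2 (hle.trans (le_abs_self _))⟩
  calc √(∑ n ∈ A, c n ^ 2) ≤ √(∑ j ∈ Finset.Icc 1 A.card, (M * (s j)⁻¹) ^ 2) :=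
        Real.sqrt_le_sqrt hsum
    _ = M * √(∑ j ∈ Finset.Icc 1 A.card, (s j)⁻¹ ^ 2) := by
        simp only [mul_pow]
        rw [← Finset.mul_sum, Real.sqrt_mul (sq_nonneg M), Real.sqrt_sq hM]

theorem norm_sum_sign_smul_le_two_mul {ι E : Type*} [SeminormedAddCommGroup E] [Module ℝ E]
    {y : ι → E} {A : Finset ι} {R : ℝ} (hR : ∀ B ⊆ A, ‖∑ n ∈ B, y n‖ ≤ R) {δ : ι → ℝ}
    (hδ : ∀ n ∈ A, |δ n| = 1) : ‖∑ n ∈ A, δ n • y n‖ ≤ 2 * R := by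
  classical
  have hpos : ∑ n ∈ A with δ n = 1, δ n • y n = ∑ n ∈ A with δ n = 1, y n :=
    Finset.sum_congr rfl fun n hn ↦ by rw [(Finset.mem_filter.1 hn).2, one_smul]
  have hneg : ∑ n ∈ A with δ n ≠ 1, δ n • y n = -∑ n ∈ A with δ n ≠ 1, y n := by
    rw [← Finset.sum_neg_distrib]
    refine Finset.sum_congr rfl fun n hn ↦ ?_
    obtain ⟨hnA, hn1⟩ := Finset.mem_filter.1 hn
    rw [((abs_eq zero_le_one).1 (hδ n hnA)).resolve_left hn1, neg_one_smul]
  calc ‖∑ n ∈ A, δ n • y n‖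
      = ‖∑ n ∈ A with δ n = 1, y n - ∑ n ∈ A with δ n ≠ 1, y n‖ := by
        rw [← Finset.sum_filter_add_sum_filter_not A (δ · = 1), hpos, hneg, sub_eq_add_neg]
    _ ≤ ‖∑ n ∈ A with δ n = 1, y n‖ + ‖∑ n ∈ A with δ n ≠ 1, y n‖ := norm_sub_le _ _
    _ ≤ R + R := add_le_add (hR _ (A.filter_subset _)) (hR _ (A.filter_subset _))
    _ = 2 * R := (two_mul R).symm

section

open Filter Topology

variable {X : Type*} [NormedAddCommGroup X] [NormedSpace ℝ X]

theorem exists_continuousLinearMap_lp_norm_eq_sqrt_sum_sq (φ : ℕ → X →L[ℝ] ℝ) (A : Finset ℕ) :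
    ∃ T : X →L[ℝ] lp (fun _ : ℕ ↦ ℝ) 2, ∀ f, ‖T f‖ = √(∑ n ∈ A, φ n f ^ 2) := by
  refine ⟨∑ n ∈ A, (lp.singleContinuousLinearMap ℝ (fun _ : ℕ ↦ ℝ) 2 n).comp (φ n), fun f ↦ ?_⟩
  rw [eq_comm, Real.sqrt_eq_iff_eq_sq (by positivity) (norm_nonneg _)]
  simpa [eq_comm] using lp.norm_sum_single (E := fun _ : ℕ ↦ ℝ) (p := 2) (by simp) (φ · f) A

theorem IsGTSpace.exists_sum_sqrt_sum_sq_le (hGT : IsGTSpace X) :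
    ∃ D ≥ 0, ∀ (φ : ℕ → X →L[ℝ] ℝ) (A : Finset ℕ) {M : ℝ}, 0 ≤ M →
      (∀ f, √(∑ n ∈ A, φ n f ^ 2) ≤ M * ‖f‖) → ∀ (B : Finset ℕ) (f : ℕ → X),
      ∃ ε : ℕ → ℝ, (∀ k, |ε k| = 1) ∧
        ∑ k ∈ B, √(∑ n ∈ A, φ n (f k) ^ 2) ≤ D * M * ‖∑ k ∈ B, ε k • f k‖ := by
  obtain ⟨D, hD⟩ := hGT
  refine ⟨|D|, abs_nonneg D, fun φ A M hM hφ B f ↦ ?_⟩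
  obtain ⟨T, hT⟩ := exists_continuousLinearMap_lp_norm_eq_sqrt_sum_sq φ A
  obtain ⟨ε, hε, hsum⟩ := hD T B f
  have hTM : ‖T‖ ≤ M := T.opNorm_le_bound hM fun g ↦ (hT g).trans_le (hφ g)
  refine ⟨ε, fun k ↦ (abs_eq zero_le_one).2 (hε k), ?_⟩
  calc ∑ k ∈ B, √(∑ n ∈ A, φ n (f k) ^ 2) = ∑ k ∈ B, ‖T (f k)‖ := by simp only [hT]
    _ ≤ D * ‖T‖ * ‖∑ k ∈ B, ε k • f k‖ := hsum
    _ ≤ |D| * M * ‖∑ k ∈ B, ε k • f k‖ := by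
      gcongr
      exact le_abs_self D

variable {x : ℕ → X} {xs : ℕ → X →L[ℝ] ℝ}

/-- `(x_n)` and `(x_n^*)` form a biorthogonal system, so that `x_n^*(f)` is the coefficient of a
finite sum `f = ∑ c_n x_n` at `x_n`. -/
def Biorthogonal (x : ℕ → X) (xs : ℕ → X →L[ℝ] ℝ) : Prop :=
  ∀ m n, xs m (x n) = if m = n then (1 : ℝ) else 0

theorem Biorthogonal.coeff_sum_smul (hbiorth : Biorthogonal x xs) (A : Finset ℕ) (c : ℕ → ℝ)
    (k : ℕ) : xs k (∑ n ∈ A, c n • x n) = if k ∈ A then c k else 0 := by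
  simp [hbiorth k]

theorem IsGTSpace.exists_card_le_mul_norm_sum_sign_smul (hGT : IsGTSpace X)
    (hbiorth : Biorthogonal x xs) :
    ∃ D ≥ 0, ∀ (A : Finset ℕ) {M : ℝ}, 0 ≤ M → (∀ f, √(∑ n ∈ A, xs n f ^ 2) ≤ M * ‖f‖) →
      ∃ ε : ℕ → ℝ, (∀ k, |ε k| = 1) ∧ (A.card : ℝ) ≤ D * M * ‖∑ k ∈ A, ε k • x k‖ := by
  obtain ⟨D, hD₀, hD⟩ := hGT.exists_sum_sqrt_sum_sq_le
  refine ⟨D, hD₀, fun A M hM hA ↦ ?_⟩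
  obtain ⟨ε, hε, hsum⟩ := hD xs A hM hA A x
  have hunit : ∀ k ∈ A, √(∑ n ∈ A, xs n (x k) ^ 2) = 1 := fun k hk ↦ by simp [hbiorth _ k, hk]
  refine ⟨ε, hε, ?_⟩
  rwa [Finset.sum_congr rfl hunit, Finset.sum_const, nsmul_one] at hsum

theorem IsXBasis.tendsto_coeff (hb : IsXBasis x xs) (f : X) :
    Tendsto (fun n ↦ xs n f) cofinite (𝓝 0) := by
  have hequi : Equicontinuous fun n ↦ (xs n : X → ℝ) :=
    ((NormedSpace.equicontinuous_TFAE xs).out 5 1).1 hb.dual_ub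
  let S : Set X := {g | ∃ (A : Finset ℕ) (c : ℕ → ℝ), g = ∑ n ∈ A, c n • x n}
  have hS : ∀ g ∈ S, Tendsto (fun n ↦ xs n g) cofinite (𝓝 0) := by
    rintro _ ⟨A, c, rfl⟩
    refine tendsto_const_nhds.congr' (A.eventually_cofinite_notMem.mono fun n hn ↦ ?_)
    exact ((Biorthogonal.coeff_sum_smul hb.biorth A c n).trans (if_neg hn)).symm
  have hf : f ∈ closure S := Metric.mem_closure_iff.2 fun r hr ↦ by
    obtain ⟨A, c, hc⟩ := hb.dense f r hr
    exact ⟨_, ⟨A, c, rfl⟩, by rwa [dist_eq_norm]⟩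
  exact (hequi f).tendsto_of_mem_closure tendsto_const_nhds hS hf

namespace BRTP

theorem exists_norm_sum_sign_smul_subset_le (htrunc : BRTP x xs) (hbiorth : Biorthogonal x xs) :
    ∃ C ≥ 0, ∀ {A B : Finset ℕ}, B ⊆ A → ∀ {ε : ℕ → ℝ}, (∀ n ∈ A, |ε n| = 1) →
      ‖∑ n ∈ B, ε n • x n‖ ≤ C * ‖∑ n ∈ A, ε n • x n‖ := by
  obtain ⟨C, hC₁, hC⟩ := htrunc
  have hC₀ : 0 ≤ C := zero_le_one.trans hC₁
  refine ⟨C, hC₀, fun {A B} hBA {ε} hε ↦ ?_⟩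
  rcases B.eq_empty_or_nonempty with rfl | hB
  · simpa using mul_nonneg hC₀ (norm_nonneg _)
  set f := ∑ n ∈ A, ε n • x n
  have hcoeff (k : ℕ) : xs k f = if k ∈ A then ε k else 0 := hbiorth.coeff_sum_smul A ε k
  have hcoeffB : ∀ k ∈ B, xs k f = ε k := fun k hk ↦ by rw [hcoeff, if_pos (hBA hk)]
  have habsB : ∀ k ∈ B, |xs k f| = 1 := fun k hk ↦ by rw [hcoeffB k hk, hε k (hBA hk)]
  have hle_one (k : ℕ) : |xs k f| ≤ 1 := by
    rw [hcoeff]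
    split_ifs with hk
    · exact (hε k hk).le
    · simp
  have hgreedy : GreedySet (fun n ↦ xs n f) B := fun n hn k _ ↦
    (hle_one k).trans_eq (habsB n hn).symm
  have hmin : (B.inf' hB fun n ↦ |xs n f|) = 1 := by
    rw [Finset.inf'_congr hB rfl habsB, Finset.inf'_const]
  have hsgn : ∑ n ∈ B, sgn (xs n f) • x n = ∑ n ∈ B, ε n • x n :=
    Finset.sum_congr rfl fun n hn ↦ by rw [sgn_eq_self (habsB n hn), hcoeffB n hn]
  simpa only [hmin, hsgn, one_smul] using hC f B hB hgreedy

theorem exists_norm_sum_sign_smul_le (htrunc : BRTP x xs) (hbiorth : Biorthogonal x xs) :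
    ∃ C ≥ 0, ∀ {A B : Finset ℕ}, B ⊆ A → ∀ {ε δ : ℕ → ℝ}, (∀ n ∈ A, |ε n| = 1) →
      (∀ n ∈ B, |δ n| = 1) → ‖∑ n ∈ B, δ n • x n‖ ≤ C * ‖∑ n ∈ A, ε n • x n‖ := by
  obtain ⟨C, hC₀, hC⟩ := htrunc.exists_norm_sum_sign_smul_subset_le hbiorth
  refine ⟨2 * C, by positivity, fun {A B} hBA {ε δ} hε hδ ↦ ?_⟩
  have hsign : ∀ n ∈ B, δ n • x n = (δ n * ε n) • ε n • x n := fun n hn ↦ by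
    rw [smul_smul, mul_assoc, ← abs_mul_abs_self (ε n), hε n (hBA hn), mul_one, mul_one]
  rw [Finset.sum_congr rfl hsign, mul_assoc]
  refine norm_sum_sign_smul_le_two_mul (fun E hEB ↦ hC (hEB.trans hBA) hε) fun n hn ↦ ?_
  rw [abs_mul, hδ n hn, hε n (hBA hn), one_mul]

theorem exists_abs_coeff_mul_norm_sum_sgn_smul_le (htrunc : BRTP x xs)
    (htendsto : ∀ f, Tendsto (fun n ↦ xs n f) cofinite (𝓝 0)) :
    ∃ C ≥ 0, ∀ (f : X) {A : Finset ℕ}, A.Nonempty → ∃ k ∈ A, ∃ G, A ⊆ G ∧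
      |xs k f| * ‖∑ n ∈ G, sgn (xs n f) • x n‖ ≤ C * ‖f‖ := by
  obtain ⟨C, hC₁, hC⟩ := htrunc
  have hC₀ : 0 ≤ C := zero_le_one.trans hC₁
  refine ⟨C, hC₀, fun f A hA ↦ ?_⟩
  obtain ⟨k, hk, hkmin⟩ := A.exists_min_image (fun n ↦ |xs n f|) hA
  refine ⟨k, hk, ?_⟩
  rcases (abs_nonneg (xs k f)).eq_or_lt with hzero | hpos
  · exact ⟨A, subset_rfl, by simpa [← hzero] using mul_nonneg hC₀ (norm_nonneg f)⟩
  have hfin : {n | |xs k f| ≤ |xs n f|}.Finite := by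
    simpa using (htendsto f).abs.eventually_lt_const (by simpa using hpos)
  set G := hfin.toFinset
  have hmem (n : ℕ) : n ∈ G ↔ |xs k f| ≤ |xs n f| := by simp [G]
  have hAG : A ⊆ G := fun n hn ↦ (hmem n).2 (hkmin n hn)
  have hgreedy : GreedySet (fun n ↦ xs n f) G := fun n hn j hj ↦
    (not_le.1 (mt (hmem j).2 hj)).le.trans ((hmem n).1 hn)
  have hmin : |xs k f| ≤ G.inf' (hA.mono hAG) fun n ↦ |xs n f| :=
    (Finset.le_inf'_iff _ _).2 fun n hn ↦ (hmem n).1 hn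
  refine ⟨G, hAG, le_trans ?_ (hC f G (hA.mono hAG) hgreedy)⟩
  rw [norm_smul]
  gcongr
  exact hmin.trans (le_abs_self _)

theorem exists_abs_coeff_mul_norm_sum_le (htrunc : BRTP x xs) (hbiorth : Biorthogonal x xs)
    (htendsto : ∀ f, Tendsto (fun n ↦ xs n f) cofinite (𝓝 0)) :
    ∃ C ≥ 0, ∀ (f : X) {A : Finset ℕ}, A.Nonempty → ∃ k ∈ A, ∃ G, A ⊆ G ∧
      |xs k f| * ‖∑ n ∈ G, x n‖ ≤ C * ‖f‖ := by
  obtain ⟨C₁, hC₁₀, hC₁⟩ := htrunc.exists_norm_sum_sign_smul_le hbiorth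
  obtain ⟨C₂, hC₂₀, hC₂⟩ := htrunc.exists_abs_coeff_mul_norm_sum_sgn_smul_le htendsto
  refine ⟨C₁ * C₂, by positivity, fun f A hA ↦ ?_⟩
  obtain ⟨k, hk, G, hAG, hG⟩ := hC₂ f hA
  have hsgn : ‖∑ n ∈ G, x n‖ ≤ C₁ * ‖∑ n ∈ G, sgn (xs n f) • x n‖ := by
    simpa only [one_smul] using hC₁ subset_rfl (fun n _ ↦ abs_sgn (xs n f)) (δ := fun _ ↦ 1)
      fun _ _ ↦ abs_one
  refine ⟨k, hk, G, hAG, ?_⟩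
  calc |xs k f| * ‖∑ n ∈ G, x n‖
      ≤ |xs k f| * (C₁ * ‖∑ n ∈ G, sgn (xs n f) • x n‖) := by gcongr
    _ = C₁ * (|xs k f| * ‖∑ n ∈ G, sgn (xs n f) • x n‖) := by ring
    _ ≤ C₁ * (C₂ * ‖f‖) := by gcongr
    _ = C₁ * C₂ * ‖f‖ := by ring

theorem exists_sqrt_sum_sq_coeff_le (htrunc : BRTP x xs) (hbiorth : Biorthogonal x xs)
    (htendsto : ∀ f, Tendsto (fun n ↦ xs n f) cofinite (𝓝 0))
    {s : ℕ → ℝ} (hs : ∀ m, 1 ≤ m → 0 < s m) {K : ℝ}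
    (hK : ∀ m, 1 ≤ m → ∀ A : Finset ℕ, m ≤ A.card → s m ≤ K * ‖∑ n ∈ A, x n‖) :
    ∃ M ≥ 0, ∀ (A : Finset ℕ) (f : X),
      √(∑ n ∈ A, xs n f ^ 2) ≤ M * √(∑ j ∈ Finset.Icc 1 A.card, (s j)⁻¹ ^ 2) * ‖f‖ := by
  obtain ⟨C, hC₀, hC⟩ := htrunc.exists_abs_coeff_mul_norm_sum_le hbiorth htendsto
  have hK₀ : 0 ≤ K :=
    (pos_of_mul_pos_left ((hs 1 le_rfl).trans_le (hK 1 le_rfl {0} le_rfl)) (norm_nonneg _)).le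
  refine ⟨K * C, by positivity, fun A f ↦ ?_⟩
  rw [mul_right_comm]
  refine sqrt_sum_sq_le_of_forall_exists_mul_le hs (by positivity) A fun B _ hB ↦ ?_
  obtain ⟨k, hk, G, hBG, hG⟩ := hC f hB
  refine ⟨k, hk, ?_⟩
  calc |xs k f| * s B.card
      ≤ |xs k f| * (K * ‖∑ n ∈ G, x n‖) := by
        gcongr
        exact hK _ (Finset.card_pos.2 hB) G (Finset.card_le_card hBG)
    _ = K * (|xs k f| * ‖∑ n ∈ G, x n‖) := by ring
    _ ≤ K * (C * ‖f‖) := by gcongr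
    _ = K * C * ‖f‖ := by ring

end BRTP

theorem stmt10_general (hGT : IsGTSpace X) (hbiorth : Biorthogonal x xs)
    (htendsto : ∀ f, Tendsto (fun n ↦ xs n f) cofinite (𝓝 0)) (htrunc : BRTP x xs)
    {s : ℕ → ℝ} (hs : ∀ m, 1 ≤ m → 0 < s m) {K : ℝ}
    (hK : ∀ m, 1 ≤ m → ∀ A : Finset ℕ, m ≤ A.card → s m ≤ K * ‖∑ n ∈ A, x n‖) :
    ∃ C : ℝ, ∀ m : ℕ, 1 ≤ m → ∀ A : Finset ℕ, m ≤ A.card →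
      m / √(∑ n ∈ Finset.Icc 1 m, (s n)⁻¹ ^ 2) ≤ C * ‖∑ n ∈ A, x n‖ := by
  obtain ⟨C, hC₀, hC⟩ := htrunc.exists_norm_sum_sign_smul_le hbiorth
  obtain ⟨M, hM₀, hM⟩ := htrunc.exists_sqrt_sum_sq_coeff_le hbiorth htendsto hs hK
  obtain ⟨D, hD₀, hD⟩ := hGT.exists_card_le_mul_norm_sum_sign_smul hbiorth
  refine ⟨D * M * C, fun m _ A' hA' ↦ ?_⟩
  obtain ⟨A, hAA', rfl⟩ := Finset.exists_subset_card_eq hA'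
  set S := √(∑ n ∈ Finset.Icc 1 A.card, (s n)⁻¹ ^ 2)
  obtain ⟨ε, hε, hcard⟩ := hD A (by positivity) (hM A)
  have hsign : ‖∑ n ∈ A, ε n • x n‖ ≤ C * ‖∑ n ∈ A', x n‖ := by
    simpa only [one_smul] using hC hAA' (ε := fun _ ↦ 1) (fun _ _ ↦ abs_one) fun n _ ↦ hε n
  refine div_le_of_le_mul₀ (Real.sqrt_nonneg _) (by positivity) ?_
  calc (A.card : ℝ) ≤ D * (M * S) * ‖∑ n ∈ A, ε n • x n‖ := hcard
    _ ≤ D * (M * S) * (C * ‖∑ n ∈ A', x n‖) := by gcongr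
    _ = D * M * C * ‖∑ n ∈ A', x n‖ * S := by ring

end

/-- Bootstrap lemma for GT spaces: if the basis has the bounded restricted
truncation operator property and `s_m ≤ K·φ_l(m)`, then
`m·(∑_{n=1}^m s_n⁻²)^(-1/2) ≤ C·φ_l(m)`. -/
theorem stmt10 {X : Type*} [NormedAddCommGroup X] [NormedSpace ℝ X] [CompleteSpace X]
    (hGT : IsGTSpace X) (x : ℕ → X) (xs : ℕ → X →L[ℝ] ℝ)
    (hbasis : IsXBasis x xs) (htrunc : BRTP x xs)
    (s : ℕ → ℝ) (hs : ∀ m : ℕ, 1 ≤ m → 0 < s m)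
    (K : ℝ) (hK : ∀ m : ℕ, 1 ≤ m → ∀ A : Finset ℕ, m ≤ A.card →
      s m ≤ K * ‖∑ n ∈ A, x n‖) :
    ∃ C : ℝ, ∀ m : ℕ, 1 ≤ m → ∀ A : Finset ℕ, m ≤ A.card →
      (m : ℝ) / Real.sqrt (∑ n ∈ Finset.Icc 1 m, (s n)⁻¹ ^ 2) ≤ C * ‖∑ n ∈ A, x n‖ :=
  stmt10_general hGT hbasis.biorth hbasis.tendsto_coeff htrunc hs hK
end

section
/- Let (x_n)_{n∈ℕ} be a sequence in ℓ_1 and let (g_n)_{n∈ℕ} be a sequence in ℓ_2 (so each g_n is also a bounded sequence), with pairing ⟨f,g⟩ := Σ_j f(j)g(j). Suppose that ⟨x_n, g_m⟩ = δ_{mn}; that the linear span of (x_n) is dense both in ℓ_1 and in ℓ_2; that 0 < inf_n ‖x_n‖_1 ≤ sup_n ‖x_n‖_1 < ∞ and 0 < inf_n ‖x_n‖_2 ≤ sup_n ‖x_n‖_2 < ∞; that sup_n ‖g_n‖_∞ < ∞ and sup_n ‖g_n‖_2 < ∞; and that the system (x_n, g_n) is quasi-greedy both as a basis of ℓ_1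 and as a basis of ℓ_2 (i.e., there is C₀ ≥ 1 such that ‖Σ_{n∈A} ⟨f,g_n⟩ x_n‖ ≤ C₀‖f‖ in each of the two norms, for every f in the respective space and every greedy set A of f). Then for every 1<p<2 the sequence (x_n) is equivalent in ℓ_p to the canonical basis of ℓ_p: there exist 0<c≤C<∞ such that for every finitely supported real sequence (a_n), c·(Σ_n |a_n|^p)^{1/p} ≤ ‖Σ_n a_n x_n‖_{ℓ_p} ≤ C·(Σ_n |a_n|^p)^{1/p}. -/
open scoped BigOperators

/-- The `ℓ_1` norm of a sequence. -/
noncomputable def norm1 (f : ℕ → ℝ) : ℝ := ∑' j, |f j|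

/-- The `ℓ_2` norm of a sequence. -/
noncomputable def norm2 (f : ℕ → ℝ) : ℝ := Real.sqrt (∑' j, f j ^ 2)

/-- The `ℓ_p` norm of a sequence. -/
noncomputable def normP (p : ℝ) (f : ℕ → ℝ) : ℝ := (∑' j, |f j| ^ p) ^ (1 / p)

/-- Membership in `ℓ_1`. -/
def Mem1 (f : ℕ → ℝ) : Prop := Summable fun j => |f j|

/-- Membership in `ℓ_2`. -/
def Mem2 (f : ℕ → ℝ) : Prop := Summable fun j => f j ^ 2

/-- The pairing `⟨f, g⟩ = ∑_j f j · g j`. -/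
noncomputable def pairing (f g : ℕ → ℝ) : ℝ := ∑' j, f j * g j

/-!
In `ℓ_2`, choosing signs one at a time makes the cross terms of `‖∑ ±x_n‖²` nonnegative, or
nonpositive; as `‖x_n‖_2` is bounded above and below and greedy sums are bounded, every signed sum
of `m` vectors then has `ℓ_2` norm comparable to `m ^ (1 / 2)`. The two-sided bounds on the norms
of `x_n` also force a coordinate of `x_n` of size at least `b > 0`. By the `ℓ_2` upper bound a given
`j` is such a peak for boundedly many `n`, so suitably signed sums of `m` vectors, hence all of
them, have `ℓ_1` norm at least a constant times `m`.

Replacing the coefficients of `f` exceeding a level by their signs costs a bounded factor for a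
quasi-greedy basis. With the lower bounds above, this makes the coefficient map of weak type
`(1, 1)` and `(2, 2)`. The synthesis map is bounded on `ℓ_1`, and the upper bound in `ℓ_2` for sums
of `m` vectors gives the mixed estimate `‖∑ a_n x_n‖_2 ≤ K_r (∑ |a_n| ^ r) ^ (1 / 2)` for
`|a_n| ≤ 1` and any `r < 2`. Taking `r` in `(p, 2)`, Marcinkiewicz interpolation bounds both maps
on `ℓ_p`.
-/

section LayerCake

variable {ι E : Type*} [NormedAddCommGroup E] [NormedSpace ℝ E] [CompleteSpace E]

lemma norm_sum_smul_le_integral_superlevel {A : Finset ι} {w : ι → ℝ} {v : ι → E} {c : ℝ}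
    {Φ : ℝ → ℝ} (hc : 0 ≤ c) (hw : ∀ n ∈ A, w n ∈ Set.Icc 0 c)
    (hΦ : IntervalIntegrable Φ MeasureTheory.volume 0 c)
    (h : ∀ s ∈ Set.Ioc 0 c, ‖∑ n ∈ A with s ≤ w n, v n‖ ≤ Φ s) :
    ‖∑ n ∈ A, w n • v n‖ ≤ ∫ s in 0..c, Φ s := by
  have layer : ∀ n ∈ A, ∫ s in 0..c, (Set.Iic (w n)).indicator (fun _ ↦ v n) s = w n • v n := by
    intro n hn
    rw [show Set.Iic (w n) = {s | s ≤ w n} from rfl,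
      intervalIntegral.integral_indicator (hw n hn), intervalIntegral.integral_const, sub_zero]
  rw [← Finset.sum_congr rfl layer, ← intervalIntegral.integral_finsetSum]
  · refine intervalIntegral.norm_integral_le_of_norm_le hc (.of_forall fun s hs ↦ ?_) hΦ
    simpa only [Finset.sum_filter, Set.indicator_apply, Set.mem_Iic] using h s hs
  · intro n _
    rw [intervalIntegrable_iff]
    exact (MeasureTheory.integrableOn_const (by simp)).indicator measurableSet_Iic

lemma norm_sum_smul_le_mul_of_superlevel {A : Finset ι} {w : ι → ℝ} {v : ι → E} {c M : ℝ}
    (hc : 0 ≤ c) (hw : ∀ n ∈ A, w n ∈ Set.Icc 0 c)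
    (h : ∀ s, ‖∑ n ∈ A with s ≤ w n, v n‖ ≤ M) :
    ‖∑ n ∈ A, w n • v n‖ ≤ c * M := by
  simpa using norm_sum_smul_le_integral_superlevel hc hw intervalIntegrable_const fun s _ ↦ h s

lemma norm_sum_smul_le_mul_of_sublevel {A : Finset ι} {w : ι → ℝ} {v : ι → E} {c M : ℝ}
    (hc : 0 ≤ c) (hw : ∀ n ∈ A, w n ∈ Set.Icc 0 c)
    (h : ∀ s, ‖∑ n ∈ A with w n ≤ s, v n‖ ≤ M) :
    ‖∑ n ∈ A, w n • v n‖ ≤ 2 * c * M := by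
  have full : ‖∑ n ∈ A, v n‖ ≤ M := by
    simpa only [Finset.filter_true_of_mem fun n hn ↦ (hw n hn).2] using h c
  have reflected : ‖∑ n ∈ A, (c - w n) • v n‖ ≤ c * M :=
    norm_sum_smul_le_mul_of_superlevel hc
      (fun n hn ↦ ⟨sub_nonneg.2 (hw n hn).2, sub_le_self _ (hw n hn).1⟩) fun s ↦ by
        simpa only [le_sub_comm] using h (c - s)
  calc ‖∑ n ∈ A, w n • v n‖ = ‖c • ∑ n ∈ A, v n - ∑ n ∈ A, (c - w n) • v n‖ := by
        simp only [Finset.smul_sum, ← Finset.sum_sub_distrib, ← sub_smul, sub_sub_cancel]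
    _ ≤ c * M + c * M := by
        refine (norm_sub_le _ _).trans (add_le_add ?_ reflected)
        rw [norm_smul, Real.norm_of_nonneg hc]
        gcongr
    _ = 2 * c * M := by ring

end LayerCake

section Signs

lemma abs_sign_of_ne_zero {a : ℝ} (ha : a ≠ 0) : |(SignType.sign a : ℝ)| = 1 := by
  rcases ha.lt_or_gt with h | h <;> simp [h]

variable {ι : Type*}

lemma exists_sign_sum_diag_le (M : ι → ι → ℝ) (A : Finset ι) :
    ∃ ε : ι → ℝ, (∀ n, |ε n| = 1) ∧
      ∑ n ∈ A, M n n ≤ ∑ n ∈ A, ∑ k ∈ A, ε n * ε k * M n k := by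
  classical
  induction A using Finset.induction_on with
  | empty => exact ⟨1, by simp, by simp⟩
  | insert m A hm ih =>
    obtain ⟨ε, hε, ih⟩ := ih
    set r := ∑ k ∈ A, ε k * M m k + ∑ n ∈ A, ε n * M n m
    obtain ⟨σ, hσ, hσr⟩ : ∃ σ : ℝ, |σ| = 1 ∧ 0 ≤ σ * r := by
      rcases le_total 0 r with hr | hr
      · exact ⟨1, by simp, by simpa⟩
      · exact ⟨-1, by simp, by simpa⟩
    have off (n) (hn : n ∈ A) : Function.update ε m σ n = ε n :=
      Function.update_of_ne (ne_of_mem_of_not_mem hn hm) ..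
    refine ⟨Function.update ε m σ, fun n ↦ ?_, ?_⟩
    · rcases eq_or_ne n m with rfl | h <;> simp [*]
    · have row : ∑ k ∈ A, σ * Function.update ε m σ k * M m k = σ * ∑ k ∈ A, ε k * M m k := by
        rw [Finset.mul_sum]
        exact Finset.sum_congr rfl fun k hk ↦ by rw [off k hk, mul_assoc]
      have block : ∑ n ∈ A, ∑ k ∈ insert m A,
            Function.update ε m σ n * Function.update ε m σ k * M n k =
          σ * ∑ n ∈ A, ε n * M n m + ∑ n ∈ A, ∑ k ∈ A, ε n * ε k * M n k := by
        rw [Finset.mul_sum, ← Finset.sum_add_distrib]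
        refine Finset.sum_congr rfl fun n hn ↦ ?_
        rw [Finset.sum_insert hm, off n hn, Function.update_self]
        congr 1
        · ring
        · exact Finset.sum_congr rfl fun k hk ↦ by rw [off k hk]
      have square : σ * σ = 1 := by rw [← abs_mul_abs_self, hσ, one_mul]
      rw [Finset.sum_insert hm, Finset.sum_insert hm, Finset.sum_insert hm, Function.update_self,
        row, block, square, one_mul]
      linarith [mul_add σ (∑ k ∈ A, ε k * M m k) (∑ n ∈ A, ε n * M n m)]

variable {E : Type*} [NormedAddCommGroup E] [InnerProductSpace ℝ E]

lemma norm_sum_smul_sq (A : Finset ι) (ε : ι → ℝ) (v : ι → E) :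
    ‖∑ n ∈ A, ε n • v n‖ ^ 2 = ∑ n ∈ A, ∑ k ∈ A, ε n * ε k * inner ℝ (v n) (v k) := by
  rw [← real_inner_self_eq_norm_sq, sum_inner]
  simp only [inner_sum, real_inner_smul_left, real_inner_smul_right, mul_left_comm, mul_assoc]

lemma exists_sign_sum_norm_sq_le (A : Finset ι) (v : ι → E) :
    ∃ ε : ι → ℝ, (∀ n, |ε n| = 1) ∧ ∑ n ∈ A, ‖v n‖ ^ 2 ≤ ‖∑ n ∈ A, ε n • v n‖ ^ 2 := by
  obtain ⟨ε, hε, h⟩ := exists_sign_sum_diag_le (fun n k ↦ inner ℝ (v n) (v k)) A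
  exact ⟨ε, hε, by simpa only [norm_sum_smul_sq, real_inner_self_eq_norm_sq] using h⟩

lemma exists_sign_norm_sq_le_sum (A : Finset ι) (v : ι → E) :
    ∃ ε : ι → ℝ, (∀ n, |ε n| = 1) ∧ ‖∑ n ∈ A, ε n • v n‖ ^ 2 ≤ ∑ n ∈ A, ‖v n‖ ^ 2 := by
  obtain ⟨ε, hε, h⟩ := exists_sign_sum_diag_le (fun n k ↦ -inner ℝ (v n) (v k)) A
  refine ⟨ε, hε, ?_⟩
  simpa only [norm_sum_smul_sq, real_inner_self_eq_norm_sq, mul_neg, Finset.sum_neg_distrib,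
    neg_le_neg_iff] using h

end Signs

/-- A quasi-greedy basis `x` of `E` with coordinate functionals `φ`: a fundamental, biorthogonal
system with bounded functionals, whose greedy sums are bounded by `C`. -/
structure IsQuasiGreedyBasis {E : Type*} [NormedAddCommGroup E] [NormedSpace ℝ E]
    (x : ℕ → E) (φ : ℕ → StrongDual ℝ E) (C : ℝ) : Prop where
  pos : 0 < C
  biorthogonal : ∀ m n, φ m (x n) = if m = n then 1 else 0
  dense_span : Dense (Submodule.span ℝ (Set.range x) : Set E)
  bounded : ∃ G, ∀ n, ‖φ n‖ ≤ G
  norm_sum_le : ∀ f A, GreedySet (fun n ↦ φ n f) A → ‖∑ n ∈ A, φ n f • x n‖ ≤ C * ‖f‖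

/-- Lower democracy of order `1 / r`: the signed sums of `m` vectors of `x` have norm at least
`κ * m ^ (1 / r)`. -/
def IsLowerDemocratic {ι E : Type*} [NormedAddCommGroup E] [NormedSpace ℝ E] (x : ι → E)
    (κ r : ℝ) : Prop :=
  ∀ ⦃A : Finset ι⦄ ⦃ε : ι → ℝ⦄, (∀ n ∈ A, |ε n| = 1) →
    κ * (A.card : ℝ) ^ r⁻¹ ≤ ‖∑ n ∈ A, ε n • x n‖

/-- Upper democracy of order `1 / r`: sums of `m` vectors of `x` have norm at most
`K * m ^ (1 / r)`. By convexity it is the same to ask this for signs or, as here, for all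
coefficients in `[-1, 1]`. -/
def IsUpperDemocratic {ι E : Type*} [NormedAddCommGroup E] [NormedSpace ℝ E] (x : ι → E)
    (K r : ℝ) : Prop :=
  ∀ ⦃A : Finset ι⦄ ⦃a : ι → ℝ⦄, (∀ n ∈ A, |a n| ≤ 1) →
    ‖∑ n ∈ A, a n • x n‖ ≤ K * (A.card : ℝ) ^ r⁻¹

namespace IsQuasiGreedyBasis

section Banach

variable {E : Type*} [NormedAddCommGroup E] [NormedSpace ℝ E] {x : ℕ → E}
  {φ : ℕ → StrongDual ℝ E} {C : ℝ}

lemma coord_sum (h : IsQuasiGreedyBasis x φ C) (A : Finset ℕ) (a : ℕ → ℝ) (k : ℕ) :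
    φ k (∑ n ∈ A, a n • x n) = if k ∈ A then a k else 0 := by
  simp [h.biorthogonal]

lemma norm_sum_subset_le (h : IsQuasiGreedyBasis x φ C) {A B : Finset ℕ} {ε : ℕ → ℝ}
    (hε : ∀ n ∈ A, |ε n| = 1) (hBA : B ⊆ A) :
    ‖∑ n ∈ B, ε n • x n‖ ≤ C * ‖∑ n ∈ A, ε n • x n‖ := by
  have greedy : GreedySet (fun k ↦ φ k (∑ n ∈ A, ε n • x n)) B := by
    intro n hn k _
    simp only [h.coord_sum]
    rw [if_pos (hBA hn), hε n (hBA hn)]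
    split_ifs with hk
    · exact (hε k hk).le
    · simp
  have coord (n) (hn : n ∈ B) : φ n (∑ n ∈ A, ε n • x n) = ε n := by
    rw [h.coord_sum, if_pos (hBA hn)]
  convert h.norm_sum_le _ B greedy using 2
  exact Finset.sum_congr rfl fun n hn ↦ by rw [coord n hn]

lemma norm_sum_le_of_abs_le_one [CompleteSpace E] (h : IsQuasiGreedyBasis x φ C) {A : Finset ℕ}
    {a ε : ℕ → ℝ} (hε : ∀ n ∈ A, |ε n| = 1) (ha : ∀ n ∈ A, |a n| ≤ 1) :
    ‖∑ n ∈ A, a n • x n‖ ≤ 2 * C * ‖∑ n ∈ A, ε n • x n‖ := by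
  have weighted (w : ℕ → ℝ) (hw : ∀ n ∈ A, w n ∈ Set.Icc 0 1) :
      ‖∑ n ∈ A, w n • ε n • x n‖ ≤ C * ‖∑ n ∈ A, ε n • x n‖ := by
    rw [← one_mul (C * _)]
    exact norm_sum_smul_le_mul_of_superlevel zero_le_one hw fun s ↦
      h.norm_sum_subset_le hε (A.filter_subset _)
  have abs_w (n) (hn : n ∈ A) : |a n * ε n| ≤ 1 := by rw [abs_mul, hε n hn, mul_one]; exact ha n hn
  have split : ∑ n ∈ A, a n • x n =
      ∑ n ∈ A, (a n * ε n)⁺ • ε n • x n - ∑ n ∈ A, (a n * ε n)⁻ • ε n • x n := by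
    rw [← Finset.sum_sub_distrib]
    refine Finset.sum_congr rfl fun n hn ↦ ?_
    have square : ε n * ε n = 1 := by rw [← abs_mul_abs_self, hε n hn, one_mul]
    rw [← sub_smul, posPart_sub_negPart, smul_smul, mul_assoc, square, mul_one]
  have pos := weighted (fun n ↦ (a n * ε n)⁺) fun n hn ↦
    ⟨posPart_nonneg _, sup_le ((le_abs_self _).trans (abs_w n hn)) zero_le_one⟩
  have neg := weighted (fun n ↦ (a n * ε n)⁻) fun n hn ↦
    ⟨negPart_nonneg _, sup_le ((neg_le_abs _).trans (abs_w n hn)) zero_le_one⟩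
  rw [split]
  linarith [norm_sub_le (∑ n ∈ A, (a n * ε n)⁺ • ε n • x n) (∑ n ∈ A, (a n * ε n)⁻ • ε n • x n)]

lemma finite_coord_ne_zero (h : IsQuasiGreedyBasis x φ C) {f : E}
    (hf : f ∈ Submodule.span ℝ (Set.range x)) : {n | φ n f ≠ 0}.Finite := by
  induction hf using Submodule.span_induction with
  | mem y hy =>
    obtain ⟨k, rfl⟩ := hy
    refine (Set.finite_singleton k).subset fun n hn ↦ ?_
    simpa [h.biorthogonal] using hn
  | zero => simp
  | add y z _ _ hy hz =>
    refine (hy.union hz).subset fun n hn ↦ ?_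
    by_contra! hyz
    simp_all
  | smul c y _ hy =>
    refine hy.subset fun n hn hy0 ↦ hn ?_
    rw [map_smul, hy0, smul_zero]

lemma finite_lt_abs_coord (h : IsQuasiGreedyBasis x φ C) (f : E) {t : ℝ} (ht : 0 < t) :
    {n | t < |φ n f|}.Finite := by
  obtain ⟨G, hG⟩ := h.bounded
  have hG0 : 0 ≤ G := (norm_nonneg (φ 0)).trans (hG 0)
  obtain ⟨y, hy, hfy⟩ := h.dense_span.exists_dist_lt f (show 0 < t / (G + 1) by positivity)
  refine (h.finite_coord_ne_zero hy).subset fun n hn hy0 ↦ (Set.mem_ofPred.1 hn).not_ge ?_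
  calc |φ n f| = ‖φ n (f - y)‖ := by rw [map_sub, hy0, sub_zero, Real.norm_eq_abs]
    _ ≤ G * (t / (G + 1)) :=
        (φ n).le_of_opNorm_le_of_le (hG n) ((dist_eq_norm f y).symm.trans_le hfy.le)
    _ = t * (G / (G + 1)) := mul_div_left_comm ..
    _ ≤ t := mul_le_of_le_one_right ht.le ((div_le_one (by positivity)).2 (by linarith))

lemma norm_sum_sign_le [CompleteSpace E] (h : IsQuasiGreedyBasis x φ C) {f : E} {A : Finset ℕ}
    {t : ℝ} (ht : 0 < t) (hA : ∀ n, n ∈ A ↔ t < |φ n f|) :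
    ‖∑ n ∈ A, (SignType.sign (φ n f) : ℝ) • x n‖ ≤ 2 * t⁻¹ * (C * ‖f‖) := by
  have coord_pos {n} (hn : n ∈ A) : 0 < |φ n f| := ht.trans ((hA n).1 hn)
  have sign_eq (n) (hn : n ∈ A) :
      (SignType.sign (φ n f) : ℝ) • x n = |φ n f|⁻¹ • φ n f • x n := by
    rw [smul_smul, eq_inv_mul_iff_mul_eq₀ (coord_pos hn).ne' |>.2 (abs_mul_sign (φ n f))]
  rw [Finset.sum_congr rfl sign_eq]
  refine norm_sum_smul_le_mul_of_sublevel (by positivity)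
    (fun n hn ↦ ⟨by positivity, inv_anti₀ ht ((hA n).1 hn).le⟩) fun s ↦ h.norm_sum_le f _ ?_
  intro n hn k hk
  obtain ⟨hnA, hns⟩ := Finset.mem_filter.1 hn
  by_cases hkA : k ∈ A
  · have hks : s < |φ k f|⁻¹ := not_le.1 fun hks ↦ hk (Finset.mem_filter.2 ⟨hkA, hks⟩)
    exact (inv_le_inv₀ (coord_pos hnA) (coord_pos hkA)).1 (hns.trans hks.le)
  · exact (not_lt.1 (mt (hA k).2 hkA)).trans ((hA n).1 hnA).le

lemma count_lt_abs_coord_le [CompleteSpace E] (h : IsQuasiGreedyBasis x φ C) {κ r : ℝ}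
    (democratic : IsLowerDemocratic x κ r) (hκ : 0 < κ) (hr : 0 < r) (f : E) {t : ℝ} (ht : 0 < t) :
    MeasureTheory.Measure.count {n | t < |φ n f|} ≤
      ENNReal.ofReal ((2 * C / κ) ^ r) * ENNReal.ofReal ((‖f‖ / t) ^ r) := by
  have hC := h.pos
  set A := (h.finite_lt_abs_coord f ht).toFinset
  have mem_A (n) : n ∈ A ↔ t < |φ n f| := Set.Finite.mem_toFinset _
  have sign_abs (n) (hn : n ∈ A) : |(SignType.sign (φ n f) : ℝ)| = 1 :=
    abs_sign_of_ne_zero (abs_pos.1 (ht.trans ((mem_A n).1 hn)))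
  have bound : κ * (A.card : ℝ) ^ r⁻¹ ≤ 2 * t⁻¹ * (C * ‖f‖) :=
    (democratic sign_abs).trans (h.norm_sum_sign_le ht mem_A)
  have card_le : (A.card : ℝ) ≤ (2 * C / κ * (‖f‖ / t)) ^ r := by
    rw [← Real.rpow_inv_le_iff_of_pos (by positivity) (by positivity) hr]
    calc (A.card : ℝ) ^ r⁻¹ ≤ 2 * t⁻¹ * (C * ‖f‖) / κ := (le_div_iff₀' hκ).2 bound
      _ = 2 * C / κ * (‖f‖ / t) := by ring
  rw [← ENNReal.ofReal_mul (by positivity), ← Real.mul_rpow (by positivity) (by positivity),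
    ← Set.Finite.coe_toFinset (h.finite_lt_abs_coord f ht),
    MeasureTheory.Measure.count_apply_finset, ← ENNReal.ofReal_natCast]
  exact ENNReal.ofReal_le_ofReal card_le

end Banach

section Hilbert

variable {H : Type*} [NormedAddCommGroup H] [InnerProductSpace ℝ H] [CompleteSpace H] {x : ℕ → H}
  {φ : ℕ → StrongDual ℝ H} {C : ℝ}

lemma isUpperDemocratic_two (h : IsQuasiGreedyBasis x φ C) {D : ℝ} (hD : ∀ n, ‖x n‖ ≤ D) :
    IsUpperDemocratic x (2 * C * D) 2 := by
  intro A a ha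
  have hD0 : 0 ≤ D := (norm_nonneg _).trans (hD 0)
  have hC := h.pos
  obtain ⟨ε, hε, hnorm⟩ := exists_sign_norm_sq_le_sum A x
  have signed : ‖∑ n ∈ A, ε n • x n‖ ≤ D * √A.card := by
    refine (sq_le_sq₀ (by positivity) (by positivity)).1 ?_
    calc ‖∑ n ∈ A, ε n • x n‖ ^ 2 ≤ ∑ n ∈ A, ‖x n‖ ^ 2 := hnorm
      _ ≤ ∑ _n ∈ A, D ^ 2 := by gcongr with n; exact hD n
      _ = (D * √A.card) ^ 2 := by
        rw [Finset.sum_const, nsmul_eq_mul, mul_pow, Real.sq_sqrt A.card.cast_nonneg, mul_comm]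
  rw [← one_div, ← Real.sqrt_eq_rpow, mul_assoc _ D]
  exact (h.norm_sum_le_of_abs_le_one (fun n _ ↦ hε n) ha).trans (by gcongr)

lemma isLowerDemocratic_two (h : IsQuasiGreedyBasis x φ C) {c : ℝ} (hc : 0 ≤ c)
    (hxc : ∀ n, c ≤ ‖x n‖) : IsLowerDemocratic x (c / (2 * C)) 2 := by
  intro A ε hε
  have hC := h.pos
  obtain ⟨δ, hδ, hnorm⟩ := exists_sign_sum_norm_sq_le A x
  have signed : c * √A.card ≤ ‖∑ n ∈ A, δ n • x n‖ := by
    refine (sq_le_sq₀ (by positivity) (by positivity)).1 ?_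
    calc (c * √A.card) ^ 2 = ∑ _n ∈ A, c ^ 2 := by
          rw [Finset.sum_const, nsmul_eq_mul, mul_pow, Real.sq_sqrt A.card.cast_nonneg, mul_comm]
      _ ≤ ∑ n ∈ A, ‖x n‖ ^ 2 := by gcongr with n; exact hxc n
      _ ≤ ‖∑ n ∈ A, δ n • x n‖ ^ 2 := hnorm
  rw [← one_div, ← Real.sqrt_eq_rpow, div_mul_eq_mul_div, div_le_iff₀' (by positivity)]
  exact signed.trans (h.norm_sum_le_of_abs_le_one hε fun n _ ↦ (hδ n).le)

end Hilbert

end IsQuasiGreedyBasis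

section MixedBound

variable {ι E : Type*} [NormedAddCommGroup E] [NormedSpace ℝ E] [CompleteSpace E]

lemma card_filter_le_rpow_mul_sum (A : Finset ι) (a : ι → ℝ) {r s : ℝ} (hr : 0 ≤ r)
    (hs : 0 < s) :
    ((A.filter fun n ↦ s ≤ |a n|).card : ℝ) ≤ s ^ (-r) * ∑ n ∈ A, |a n| ^ r := by
  rw [Real.rpow_neg hs.le, ← div_eq_inv_mul, le_div_iff₀ (by positivity)]
  calc ((A.filter fun n ↦ s ≤ |a n|).card : ℝ) * s ^ r
      = ∑ n ∈ A with s ≤ |a n|, s ^ r := by rw [Finset.sum_const, nsmul_eq_mul]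
    _ ≤ ∑ n ∈ A with s ≤ |a n|, |a n| ^ r :=
        Finset.sum_le_sum fun n hn ↦ Real.rpow_le_rpow hs.le (Finset.mem_filter.1 hn).2 hr
    _ ≤ ∑ n ∈ A, |a n| ^ r :=
        Finset.sum_le_sum_of_subset_of_nonneg (A.filter_subset _) fun n _ _ ↦ by positivity

lemma IsUpperDemocratic.norm_sum_le {x : ι → E} {K q r : ℝ} (h : IsUpperDemocratic x K q)
    (hK : 0 ≤ K) (hr : 0 ≤ r) (hrq : r < q) {A : Finset ι} {a : ι → ℝ}
    (ha : ∀ n ∈ A, |a n| ≤ 1) :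
    ‖∑ n ∈ A, a n • x n‖ ≤ K / (1 - r / q) * (∑ n ∈ A, |a n| ^ r) ^ q⁻¹ := by
  have hq : 0 < q := hr.trans_lt hrq
  have exponent : r / q < 1 := (div_lt_one hq).2 hrq
  set S := ∑ n ∈ A, |a n| ^ r
  have hS : 0 ≤ S := Finset.sum_nonneg fun n _ ↦ by positivity
  have superlevel (s : ℝ) (hs : s ∈ Set.Ioc (0 : ℝ) 1) :
      ‖∑ n ∈ A with s ≤ |a n|, (SignType.sign (a n) : ℝ) • x n‖ ≤
        K * S ^ q⁻¹ * s ^ (-(r / q)) := by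
    have hs0 : 0 ≤ s := hs.1.le
    calc _ ≤ K * ((A.filter fun n ↦ s ≤ |a n|).card : ℝ) ^ q⁻¹ := h fun n hn ↦
          (abs_sign_of_ne_zero (abs_pos.1 (hs.1.trans_le (Finset.mem_filter.1 hn).2))).le
      _ ≤ K * (s ^ (-r) * S) ^ q⁻¹ := by
          gcongr
          exact card_filter_le_rpow_mul_sum A a hr hs.1
      _ = K * S ^ q⁻¹ * s ^ (-(r / q)) := by
          rw [Real.mul_rpow (by positivity) hS, ← Real.rpow_mul hs0, neg_mul, ← div_eq_mul_inv]
          ring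
  calc ‖∑ n ∈ A, a n • x n‖ = ‖∑ n ∈ A, |a n| • (SignType.sign (a n) : ℝ) • x n‖ := by
        simp only [smul_smul, abs_mul_sign]
    _ ≤ ∫ s in (0 : ℝ)..1, K * S ^ q⁻¹ * s ^ (-(r / q)) :=
        norm_sum_smul_le_integral_superlevel zero_le_one (fun n hn ↦ ⟨abs_nonneg _, ha n hn⟩)
          ((intervalIntegral.intervalIntegrable_rpow' (by linarith)).const_mul _) superlevel
    _ = K / (1 - r / q) * S ^ q⁻¹ := by
        rw [intervalIntegral.integral_const_mul, integral_rpow (.inl (by linarith)),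
          Real.one_rpow, Real.zero_rpow (by linarith), neg_add_eq_sub]
        ring

end MixedBound

section Marcinkiewicz

open MeasureTheory Set
open scoped ENNReal NNReal

lemma lintegral_Ioi_superlevel_rpow {p r u : ℝ} (hrp : r < p) (hu : 0 ≤ u) (hp : 0 < p) :
    ∫⁻ t in Ioi (0 : ℝ), (if t < u then ENNReal.ofReal ((u / t) ^ r) else 0) *
      ENNReal.ofReal (t ^ (p - 1)) = ENNReal.ofReal (1 / (p - r)) * ENNReal.ofReal (u ^ p) := by
  have integrand (t : ℝ) (ht : t ∈ Ioi (0 : ℝ)) :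
      (if t < u then ENNReal.ofReal ((u / t) ^ r) else 0) * ENNReal.ofReal (t ^ (p - 1)) =
        (Iio u).indicator (fun t ↦ ENNReal.ofReal (u ^ r * t ^ (p - r - 1))) t := by
    rw [indicator_apply, ite_mul, zero_mul, ← ENNReal.ofReal_mul (by positivity [mem_Ioi.1 ht]),
      Real.div_rpow hu (mem_Ioi.1 ht).le, div_mul_eq_mul_div, mul_div_assoc,
      ← Real.rpow_sub ht, sub_right_comm]
    rfl
  have integrable : IntegrableOn (fun t ↦ u ^ r * t ^ (p - r - 1)) (Ioc 0 u) :=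
    (intervalIntegrable_iff_integrableOn_Ioc_of_le hu).1
      ((intervalIntegral.intervalIntegrable_rpow' (by linarith)).const_mul _)
  rw [setLIntegral_congr_fun measurableSet_Ioi integrand, setLIntegral_indicator measurableSet_Iio,
    inter_comm, Ioi_inter_Iio, setLIntegral_congr Ioo_ae_eq_Ioc,
    ← ofReal_integral_eq_lintegral_ofReal integrable, ← ENNReal.ofReal_mul (by simp [hrp.le]),
    ← intervalIntegral.integral_of_le hu, intervalIntegral.integral_const_mul,
    integral_rpow (.inl (by linarith)), sub_add_cancel, Real.zero_rpow (by linarith), sub_zero,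
    mul_div_assoc', ← Real.rpow_add' hu (by simpa using hp.ne'), add_sub_cancel, one_div_mul_eq_div]
  · filter_upwards [ae_restrict_mem measurableSet_Ioc] with t ht
    have := ht.1
    simp only [Pi.zero_apply]
    positivity

lemma lintegral_Ioi_sublevel_rpow {p r u : ℝ} (hp : 0 < p) (hpr : p < r) (hu : 0 ≤ u) :
    ∫⁻ t in Ioi (0 : ℝ), (if t < u then 0 else ENNReal.ofReal ((u / t) ^ r)) *
      ENNReal.ofReal (t ^ (p - 1)) = ENNReal.ofReal (1 / (r - p)) * ENNReal.ofReal (u ^ p) := by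
  rcases hu.eq_or_lt with rfl | hu
  · simp [Real.zero_rpow (hp.trans hpr).ne', Real.zero_rpow hp.ne']
  have integrand (t : ℝ) (ht : t ∈ Ioi (0 : ℝ)) :
      (if t < u then 0 else ENNReal.ofReal ((u / t) ^ r)) * ENNReal.ofReal (t ^ (p - 1)) =
        (Ici u).indicator (fun t ↦ ENNReal.ofReal (u ^ r * t ^ (p - r - 1))) t := by
    rw [indicator_apply, ite_mul, zero_mul, ← ENNReal.ofReal_mul (by positivity [mem_Ioi.1 ht]),
      Real.div_rpow hu.le (mem_Ioi.1 ht).le, div_mul_eq_mul_div, mul_div_assoc,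
      ← Real.rpow_sub ht, sub_right_comm]
    simp only [mem_Ici, ← not_lt, ite_not]
  have exponent : p - r - 1 < -1 := by linarith
  rw [setLIntegral_congr_fun measurableSet_Ioi integrand, setLIntegral_indicator measurableSet_Ici,
    inter_eq_left.2 (Ici_subset_Ioi.2 hu), setLIntegral_congr Ioi_ae_eq_Ici.symm,
    ← ofReal_integral_eq_lintegral_ofReal ((integrableOn_Ioi_rpow_of_lt exponent hu).const_mul _),
    ← ENNReal.ofReal_mul (by simp [hpr.le]), integral_const_mul,
    integral_Ioi_rpow_of_lt exponent hu, sub_add_cancel, ← neg_sub r p, neg_div_neg_eq,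
    mul_div_assoc', ← Real.rpow_add hu, ← sub_eq_add_neg, sub_sub_cancel, one_div_mul_eq_div]
  filter_upwards [ae_restrict_mem measurableSet_Ioi] with t ht
  have := hu.trans ht
  simp only [Pi.zero_apply]
  positivity

variable {α β : Type*} [MeasurableSpace α] [MeasurableSpace β] {μ : Measure α} {ν : Measure β}

lemma lintegral_lintegral_mul_swap [SFinite μ] [SFinite ν] {k : α → β → ℝ≥0∞}
    (hk : Measurable (Function.uncurry k)) {w : α → ℝ≥0∞} (hw : Measurable w) :
    ∫⁻ t, (∫⁻ x, k t x ∂ν) * w t ∂μ = ∫⁻ x, ∫⁻ t, k t x * w t ∂μ ∂ν := by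
  rw [← lintegral_lintegral_swap (hk.mul (hw.comp measurable_fst)).aemeasurable]
  exact lintegral_congr fun t ↦
    (lintegral_mul_const _ (hk.comp measurable_prodMk_left)).symm

lemma measurable_superlevel_rpow {u : α → ℝ} (hu : Measurable u) (r : ℝ) :
    Measurable fun z : ℝ × α ↦
      if z.1 < u z.2 then ENNReal.ofReal ((u z.2 / z.1) ^ r) else 0 :=
  Measurable.ite (measurableSet_lt measurable_fst (hu.comp measurable_snd))
    (by fun_prop) measurable_const

lemma lintegral_Ioi_lintegral_superlevel_rpow [SFinite μ] {u : α → ℝ} (hu : Measurable u)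
    (hu0 : ∀ x, 0 ≤ u x) {p r : ℝ} (hrp : r < p) (hp : 0 < p) :
    ∫⁻ t in Ioi (0 : ℝ), (∫⁻ x, if t < u x then ENNReal.ofReal ((u x / t) ^ r) else 0 ∂μ) *
        ENNReal.ofReal (t ^ (p - 1)) =
      ENNReal.ofReal (1 / (p - r)) * ∫⁻ x, ENNReal.ofReal (u x ^ p) ∂μ := by
  rw [lintegral_lintegral_mul_swap, ← lintegral_const_mul _ (by fun_prop)]
  · exact lintegral_congr fun x ↦ lintegral_Ioi_superlevel_rpow hrp (hu0 x) hp
  · exact measurable_superlevel_rpow hu r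
  · fun_prop

lemma lintegral_Ioi_lintegral_sublevel_rpow [SFinite μ] {u : α → ℝ} (hu : Measurable u)
    (hu0 : ∀ x, 0 ≤ u x) {p r : ℝ} (hp : 0 < p) (hpr : p < r) :
    ∫⁻ t in Ioi (0 : ℝ), (∫⁻ x, if t < u x then 0 else ENNReal.ofReal ((u x / t) ^ r) ∂μ) *
        ENNReal.ofReal (t ^ (p - 1)) =
      ENNReal.ofReal (1 / (r - p)) * ∫⁻ x, ENNReal.ofReal (u x ^ p) ∂μ := by
  rw [lintegral_lintegral_mul_swap, ← lintegral_const_mul _ (by fun_prop)]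
  · exact lintegral_congr fun x ↦ lintegral_Ioi_sublevel_rpow hp hpr (hu0 x)
  · exact Measurable.ite (measurableSet_lt measurable_fst (hu.comp measurable_snd))
      measurable_const (by fun_prop)
  · fun_prop

lemma meas_two_mul_lt_abs_le {T : (α → ℝ) → β → ℝ} {f : α → ℝ} {r₀ r₁ t : ℝ} {C₀ C₁ : ℝ≥0}
    (hr₀ : 0 < r₀) (hr₁ : 0 < r₁) (ht : 0 < t) (hf : Measurable f)
    (subadditive : ∀ S, MeasurableSet S → ∀ y,
      |T f y| ≤ |T (indicator S f) y| + |T (indicator Sᶜ f) y|)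
    (weak₀ : ∀ S, MeasurableSet S → ν {y | t < |T (indicator S f) y|} ≤
      C₀ * ∫⁻ x, ENNReal.ofReal ((|indicator S f x| / t) ^ r₀) ∂μ)
    (weak₁ : ∀ S, MeasurableSet S → (∀ x, |indicator S f x| ≤ t) →
      ν {y | t < |T (indicator S f) y|} ≤
        C₁ * ∫⁻ x, ENNReal.ofReal ((|indicator S f x| / t) ^ r₁) ∂μ) :
    ν {y | 2 * t < |T f y|} ≤
      C₀ * (∫⁻ x, if t < |f x| then ENNReal.ofReal ((|f x| / t) ^ r₀) else 0 ∂μ) +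
      C₁ * (∫⁻ x, if t < |f x| then 0 else ENNReal.ofReal ((|f x| / t) ^ r₁) ∂μ) := by
  set S : Set α := {x | t < |f x|}
  have hS : MeasurableSet S := measurableSet_lt measurable_const (by fun_prop)
  have large (x : α) : ENNReal.ofReal ((|indicator S f x| / t) ^ r₀) =
      if t < |f x| then ENNReal.ofReal ((|f x| / t) ^ r₀) else 0 := by
    by_cases h : t < |f x| <;> simp [S, h, Real.zero_rpow hr₀.ne']
  have small (x : α) : ENNReal.ofReal ((|indicator Sᶜ f x| / t) ^ r₁) =
      if t < |f x| then 0 else ENNReal.ofReal ((|f x| / t) ^ r₁) := by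
    by_cases h : t < |f x| <;> simp [S, h, Real.zero_rpow hr₁.ne']
  have small_le (x : α) : |indicator Sᶜ f x| ≤ t := by
    by_cases h : t < |f x|
    · simp [S, h, ht.le]
    · simpa only [S, indicator_of_mem (show x ∈ {x | t < |f x|}ᶜ from h)] using not_lt.1 h
  have cover : {y | 2 * t < |T f y|} ⊆
      {y | t < |T (indicator S f) y|} ∪ {y | t < |T (indicator Sᶜ f) y|} := by
    intro y hy
    by_contra! hy'
    simp only [mem_union, mem_ofPred_eq, not_or, not_lt] at hy hy'
    linarith [subadditive S hS y]
  simp only [← large, ← small]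
  exact (measure_mono cover).trans
    ((measure_union_le _ _).trans (add_le_add (weak₀ S hS) (weak₁ Sᶜ hS.compl small_le)))

/-- The constant of the Marcinkiewicz inequality `lintegral_rpow_abs_le_of_weak_type`. -/
noncomputable def marcinkiewiczConst (p r₀ r₁ : ℝ) (C₀ C₁ : ℝ≥0) : ℝ≥0∞ :=
  ENNReal.ofReal (2 ^ p * p) *
    (C₀ * ENNReal.ofReal (1 / (p - r₀)) + C₁ * ENNReal.ofReal (1 / (r₁ - p)))

lemma marcinkiewiczConst_ne_top (p r₀ r₁ : ℝ) (C₀ C₁ : ℝ≥0) :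
    marcinkiewiczConst p r₀ r₁ C₀ C₁ ≠ ∞ := by
  unfold marcinkiewiczConst
  finiteness

theorem lintegral_rpow_abs_le_of_weak_type [SFinite μ] {T : (α → ℝ) → β → ℝ} {f : α → ℝ}
    {p r₀ r₁ : ℝ} {C₀ C₁ : ℝ≥0} (hr₀ : 0 < r₀) (hr₀p : r₀ < p) (hpr₁ : p < r₁)
    (hf : Measurable f) (hTf : AEMeasurable (T f) ν)
    (subadditive : ∀ S, MeasurableSet S → ∀ y,
      |T f y| ≤ |T (indicator S f) y| + |T (indicator Sᶜ f) y|)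
    (weak₀ : ∀ S, MeasurableSet S → ∀ t > 0, ν {y | t < |T (indicator S f) y|} ≤
      C₀ * ∫⁻ x, ENNReal.ofReal ((|indicator S f x| / t) ^ r₀) ∂μ)
    (weak₁ : ∀ S, MeasurableSet S → ∀ t > 0, (∀ x, |indicator S f x| ≤ t) →
      ν {y | t < |T (indicator S f) y|} ≤
        C₁ * ∫⁻ x, ENNReal.ofReal ((|indicator S f x| / t) ^ r₁) ∂μ) :
    ∫⁻ y, ENNReal.ofReal (|T f y| ^ p) ∂ν ≤
      marcinkiewiczConst p r₀ r₁ C₀ C₁ * ∫⁻ x, ENNReal.ofReal (|f x| ^ p) ∂μ := by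
  have hp : 0 < p := hr₀.trans hr₀p
  have halve (y : β) : ENNReal.ofReal (|T f y| ^ p) =
      ENNReal.ofReal (2 ^ p) * ENNReal.ofReal ((|T f y| / 2) ^ p) := by
    rw [← ENNReal.ofReal_mul (by positivity), ← Real.mul_rpow (by positivity) (by positivity),
      mul_div_cancel₀ _ two_ne_zero]
  have distribution (t : ℝ) (ht : 0 < t) : ν {y | t < |T f y| / 2} ≤
      C₀ * (∫⁻ x, if t < |f x| then ENNReal.ofReal ((|f x| / t) ^ r₀) else 0 ∂μ) +
      C₁ * (∫⁻ x, if t < |f x| then 0 else ENNReal.ofReal ((|f x| / t) ^ r₁) ∂μ) := by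
    simp only [lt_div_iff₀' (two_pos : (0 : ℝ) < 2)]
    exact meas_two_mul_lt_abs_le hr₀ (hp.trans hpr₁) ht hf subadditive
      (weak₀ · · t ht) (weak₁ · · t ht)
  have measurable_large : Measurable fun t ↦
      ∫⁻ x, (if t < |f x| then ENNReal.ofReal ((|f x| / t) ^ r₀) else 0) ∂μ :=
    (measurable_superlevel_rpow hf.abs r₀).lintegral_prod_right'
  calc ∫⁻ y, ENNReal.ofReal (|T f y| ^ p) ∂ν
      = ENNReal.ofReal (2 ^ p * p) *
          ∫⁻ t in Ioi (0 : ℝ), ν {y | t < |T f y| / 2} * ENNReal.ofReal (t ^ (p - 1)) := by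
        rw [lintegral_congr halve, lintegral_const_mul' _ _ ENNReal.ofReal_ne_top,
          lintegral_rpow_eq_lintegral_meas_lt_mul ν (.of_forall fun y ↦ by positivity)
            (by fun_prop) hp, ← mul_assoc, ← ENNReal.ofReal_mul (by positivity)]
    _ ≤ ENNReal.ofReal (2 ^ p * p) * ∫⁻ t in Ioi (0 : ℝ),
          (C₀ * (∫⁻ x, if t < |f x| then ENNReal.ofReal ((|f x| / t) ^ r₀) else 0 ∂μ) +
          C₁ * (∫⁻ x, if t < |f x| then 0 else ENNReal.ofReal ((|f x| / t) ^ r₁) ∂μ)) *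
            ENNReal.ofReal (t ^ (p - 1)) := by
        gcongr _ * ?_
        exact setLIntegral_mono' measurableSet_Ioi fun t ht ↦ by gcongr; exact distribution t ht
    _ = marcinkiewiczConst p r₀ r₁ C₀ C₁ * ∫⁻ x, ENNReal.ofReal (|f x| ^ p) ∂μ := by
        simp only [add_mul, mul_assoc]
        rw [lintegral_add_left, lintegral_const_mul' _ _ ENNReal.coe_ne_top,
          lintegral_const_mul' _ _ ENNReal.coe_ne_top,
          lintegral_Ioi_lintegral_superlevel_rpow hf.abs (fun x ↦ abs_nonneg _) hr₀p hp,
          lintegral_Ioi_lintegral_sublevel_rpow hf.abs (fun x ↦ abs_nonneg _) hp hpr₁,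
          marcinkiewiczConst]
        · ring
        · fun_prop

end Marcinkiewicz

section SequenceSpaces

open MeasureTheory
open scoped ENNReal

lemma coe_lp_sum_smul {q : ℝ≥0∞} (A : Finset ℕ) (a : ℕ → ℝ) (x : ℕ → lp (fun _ : ℕ ↦ ℝ) q) :
    ⇑(∑ n ∈ A, a n • x n) = fun j ↦ ∑ n ∈ A, a n * x n j := by
  ext j
  rw [lp.coeFn_sum, Finset.sum_apply]
  rfl

lemma lintegral_count_div_rpow {q : ℝ≥0∞} (f : lp (fun _ : ℕ ↦ ℝ) q) (hq : 0 < q.toReal) {t : ℝ}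
    (ht : 0 < t) :
    ∫⁻ j, ENNReal.ofReal ((|f j| / t) ^ q.toReal) ∂Measure.count =
      ENNReal.ofReal ((‖f‖ / t) ^ q.toReal) := by
  have summable : Summable fun j ↦ (|f j| / t) ^ q.toReal := by
    simpa only [Real.div_rpow (abs_nonneg _) ht.le, Real.norm_eq_abs] using
      ((lp.memℓp f).summable hq).div_const (t ^ q.toReal)
  rw [lintegral_count, ← ENNReal.ofReal_tsum_of_nonneg (fun j ↦ by positivity) summable,
    Real.div_rpow (lp.norm_nonneg' f) ht.le, lp.norm_rpow_eq_tsum hq, ← tsum_div_const]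
  simp only [Real.div_rpow (abs_nonneg _) ht.le, Real.norm_eq_abs]

lemma count_lt_abs_apply_le {q : ℝ≥0∞} (f : lp (fun _ : ℕ ↦ ℝ) q) (hq : 0 < q.toReal) {t : ℝ}
    (ht : 0 < t) :
    Measure.count {j | t < |f j|} ≤ ENNReal.ofReal ((‖f‖ / t) ^ q.toReal) := by
  rw [← lintegral_count_div_rpow f hq ht]
  refine meas_le_lintegral₀ (measurable_of_countable _).aemeasurable fun j hj ↦ ?_
  rw [ENNReal.one_le_ofReal]
  exact Real.one_le_rpow ((one_le_div ht).2 (Set.mem_ofPred.1 hj).le) hq.le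

variable {q q' : ℝ≥0∞} [Fact (1 ≤ q)] [Fact (1 ≤ q')]

/-- The functional `f ↦ ∑ j, f j * y j` on `ℓ_q` given by a sequence `y` in the dual space. -/
noncomputable def lpFunctional (q : ℝ≥0∞) [Fact (1 ≤ q)] [q.HolderConjugate q']
    (y : lp (fun _ : ℕ ↦ ℝ) q') : StrongDual ℝ (lp (fun _ : ℕ ↦ ℝ) q) :=
  (lp.dualPairing (K := 1) q q' (fun _ ↦ ContinuousLinearMap.mul ℝ ℝ) fun _ ↦ by simp).flip y

lemma lpFunctional_apply [q.HolderConjugate q']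
    (y : lp (fun _ : ℕ ↦ ℝ) q') (f : lp (fun _ : ℕ ↦ ℝ) q) :
    lpFunctional q y f = pairing f y := rfl

lemma norm_lpFunctional_le [q.HolderConjugate q']
    (y : lp (fun _ : ℕ ↦ ℝ) q') : ‖lpFunctional q y‖ ≤ ‖y‖ := by
  rw [← one_mul ‖y‖, lpFunctional]
  exact (ContinuousLinearMap.le_opNorm _ y).trans (by
    rw [ContinuousLinearMap.opNorm_flip]; gcongr; exact lp.norm_dualPairing _ _)

lemma mem1_iff_memℓp {f : ℕ → ℝ} : Mem1 f ↔ Memℓp f 1 := by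
  simp [memℓp_gen_iff (p := 1) (by simp), Mem1]

lemma mem2_iff_memℓp {f : ℕ → ℝ} : Mem2 f ↔ Memℓp f 2 := by
  simp [memℓp_gen_iff (p := 2) (by simp), Mem2]

lemma norm1_eq_norm (f : lp (fun _ : ℕ ↦ ℝ) 1) : norm1 f = ‖f‖ := by
  simp [lp.norm_eq_tsum_rpow (p := 1) (by simp), norm1]

lemma norm2_eq_norm (f : lp (fun _ : ℕ ↦ ℝ) 2) : norm2 f = ‖f‖ := by
  simp [lp.norm_eq_tsum_rpow (p := 2) (by simp), norm2, Real.sqrt_eq_rpow]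

lemma dense_span_range_of_forall_exists {E : Type*} [NormedAddCommGroup E] [NormedSpace ℝ E]
    {x : ℕ → E} (h : ∀ f, ∀ ε > 0, ∃ (s : Finset ℕ) (c : ℕ → ℝ), ‖f - ∑ n ∈ s, c n • x n‖ < ε) :
    Dense (Submodule.span ℝ (Set.range x) : Set E) := by
  refine Metric.dense_iff.2 fun f ε hε ↦ ?_
  obtain ⟨s, c, hsc⟩ := h f ε hε
  exact ⟨∑ n ∈ s, c n • x n, by rwa [Metric.mem_ball, dist_comm, dist_eq_norm],
    Submodule.sum_mem _ fun n _ ↦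
      Submodule.smul_mem _ _ (Submodule.subset_span (Set.mem_range_self n))⟩

lemma Mem1.summable_rpow {f : ℕ → ℝ} (hf : Mem1 f) {p : ℝ} (hp : 1 ≤ p) :
    Summable fun j ↦ |f j| ^ p := by
  have hp' : ENNReal.ofReal p ≠ 0 := by simpa using zero_lt_one.trans_le hp
  simpa [ENNReal.toReal_ofReal (zero_le_one.trans hp)] using
    ((mem1_iff_memℓp.1 hf).of_exponent_ge (ENNReal.one_le_ofReal.2 hp)).summable
      (ENNReal.toReal_pos hp' ENNReal.ofReal_ne_top)

lemma normP_le_of_lintegral_le {p : ℝ} {K : ℝ≥0∞} {f F : ℕ → ℝ} (hp : 0 < p) (hK : K ≠ ∞)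
    (hf : Summable fun j ↦ |f j| ^ p)
    (h : ∫⁻ n, ENNReal.ofReal (|F n| ^ p) ∂Measure.count ≤
      K * ∫⁻ j, ENNReal.ofReal (|f j| ^ p) ∂Measure.count) :
    normP p F ≤ K.toReal ^ (1 / p) * normP p f := by
  rw [lintegral_count, lintegral_count,
    ← ENNReal.ofReal_tsum_of_nonneg (fun j ↦ by positivity) hf] at h
  have tsum_le : ∑' n, |F n| ^ p ≤ K.toReal * ∑' j, |f j| ^ p := by
    simpa only [ENNReal.tsum_toReal_eq fun _ ↦ ENNReal.ofReal_ne_top, ENNReal.toReal_mul,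
      ENNReal.toReal_ofReal (Real.rpow_nonneg (abs_nonneg _) p),
      ENNReal.toReal_ofReal (tsum_nonneg fun j ↦ Real.rpow_nonneg (abs_nonneg (f j)) p)] using
      ENNReal.toReal_mono (by finiteness) h
  rw [normP, normP, ← Real.mul_rpow ENNReal.toReal_nonneg (tsum_nonneg fun j ↦ by positivity)]
  exact Real.rpow_le_rpow (tsum_nonneg fun n ↦ by positivity) tsum_le (by positivity)

lemma normP_eq_sum {p : ℝ} (hp : p ≠ 0) {s : Finset ℕ} {a : ℕ → ℝ} (ha : ∀ n ∉ s, a n = 0) :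
    normP p a = (∑ n ∈ s, |a n| ^ p) ^ (1 / p) := by
  rw [normP, tsum_eq_sum fun n hn ↦ by rw [ha n hn, abs_zero, Real.zero_rpow hp]]

end SequenceSpaces

section Democracy

open scoped ENNReal

lemma exists_le_abs_apply {f : ℕ → ℝ} {c D : ℝ} (hf : Mem1 f) (hc : 0 < c) (hcf : c ≤ norm2 f)
    (hfD : norm1 f ≤ D) : ∃ j, c ^ 2 / (D + 1) ≤ |f j| := by
  have hD : 0 ≤ D := (tsum_nonneg fun j ↦ abs_nonneg (f j)).trans hfD
  set b := c ^ 2 / (D + 1)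
  by_contra! small
  have sq_le (j : ℕ) : f j ^ 2 ≤ b * |f j| := by
    rw [← sq_abs, pow_two]
    exact mul_le_mul_of_nonneg_right (small j).le (abs_nonneg _)
  have summable_sq : Summable fun j ↦ f j ^ 2 :=
    (hf.mul_left b).of_nonneg_of_le (fun j ↦ sq_nonneg _) sq_le
  have : c ^ 2 < c ^ 2 :=
    calc c ^ 2 ≤ norm2 f ^ 2 := by gcongr
      _ = ∑' j, f j ^ 2 := Real.sq_sqrt (tsum_nonneg fun j ↦ sq_nonneg _)
      _ ≤ ∑' j, b * |f j| := summable_sq.tsum_le_tsum sq_le (hf.mul_left b)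
      _ = b * norm1 f := tsum_mul_left
      _ ≤ b * D := by gcongr
      _ < b * (D + 1) := by gcongr; linarith
      _ = c ^ 2 := div_mul_cancel₀ _ (by positivity)
  exact this.false

lemma IsUpperDemocratic.card_filter_le_abs_apply_le {ι κ : Type*} {q : ℝ≥0∞} [Fact (1 ≤ q)]
    {x : ι → lp (fun _ : κ ↦ ℝ) q} {K b r r' : ℝ} (h : IsUpperDemocratic x K r) (hK : 0 ≤ K)
    (hr : r.HolderConjugate r') (hb : 0 < b) (A : Finset ι) (j : κ) :
    ((A.filter fun n ↦ b ≤ |x n j|).card : ℝ) ≤ (K / b) ^ r' := by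
  set B := A.filter fun n ↦ b ≤ |x n j|
  have large {n} (hn : n ∈ B) : b ≤ |x n j| := (Finset.mem_filter.1 hn).2
  have bound : b * B.card ≤ K * (B.card : ℝ) ^ r⁻¹ :=
    calc b * B.card = ∑ _n ∈ B, b := by rw [Finset.sum_const, nsmul_eq_mul, mul_comm]
      _ ≤ ∑ n ∈ B, |x n j| := Finset.sum_le_sum fun n hn ↦ large hn
      _ = (∑ n ∈ B, (SignType.sign (x n j) : ℝ) • x n : lp (fun _ : κ ↦ ℝ) q) j := by
        rw [lp.coeFn_sum, Finset.sum_apply]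
        exact Finset.sum_congr rfl fun n _ ↦ (sign_mul_self (x n j)).symm
      _ ≤ ‖∑ n ∈ B, (SignType.sign (x n j) : ℝ) • x n‖ :=
        (Real.le_norm_self _).trans
          (lp.norm_apply_le_norm (zero_lt_one.trans_le Fact.out).ne' _ j)
      _ ≤ K * (B.card : ℝ) ^ r⁻¹ := h fun n hn ↦
        (abs_sign_of_ne_zero (abs_pos.1 (hb.trans_le (large hn)))).le
  rcases B.card.eq_zero_or_pos with h0 | hpos
  · rw [h0, Nat.cast_zero]
    positivity
  have hN : (0 : ℝ) < B.card := Nat.cast_pos.2 hpos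
  rw [← Real.rpow_inv_le_iff_of_pos hN.le (by positivity) hr.symm.pos, le_div_iff₀' hb]
  refine le_of_mul_le_mul_right ?_ (Real.rpow_pos_of_pos hN r⁻¹)
  rwa [mul_assoc, ← Real.rpow_add hN, add_comm, hr.inv_add_inv_eq_one, Real.rpow_one]

lemma exists_sign_sum_abs_apply_le {ι κ : Type*} (x : ι → κ → ℝ) (A : Finset ι) (J : ι → κ) :
    ∃ ε : ι → ℝ, (∀ n, |ε n| = 1) ∧
      ∑ n ∈ A, |x n (J n)| ≤ ∑ n ∈ A, |∑ k ∈ A, ε k * x k (J n)| := by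
  obtain ⟨ε, hε, h⟩ :=
    exists_sign_sum_diag_le (fun n k ↦ (SignType.sign (x n (J n)) : ℝ) * x k (J n)) A
  refine ⟨ε, hε, ?_⟩
  calc ∑ n ∈ A, |x n (J n)| = ∑ n ∈ A, (SignType.sign (x n (J n)) : ℝ) * x n (J n) := by
        simp only [sign_mul_self]
    _ ≤ ∑ n ∈ A, ∑ k ∈ A, ε n * ε k * ((SignType.sign (x n (J n)) : ℝ) * x k (J n)) := h
    _ = ∑ n ∈ A, ε n * SignType.sign (x n (J n)) * ∑ k ∈ A, ε k * x k (J n) := by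
        simp only [Finset.mul_sum]
        exact Finset.sum_congr rfl fun n _ ↦ Finset.sum_congr rfl fun k _ ↦ by ring
    _ ≤ ∑ n ∈ A, |∑ k ∈ A, ε k * x k (J n)| := by
        refine Finset.sum_le_sum fun n _ ↦ (le_abs_self _).trans ?_
        rw [abs_mul, abs_mul, hε n, one_mul]
        refine mul_le_of_le_one_left (abs_nonneg _) ?_
        rcases eq_or_ne (x n (J n)) 0 with h | h
        · simp [h]
        · exact (abs_sign_of_ne_zero h).le

lemma sum_abs_comp_le {ι κ : Type*} [DecidableEq κ] (f : lp (fun _ : κ ↦ ℝ) 1) (A : Finset ι)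
    (J : ι → κ) {m : ℝ} (hm : 0 ≤ m) (fiber : ∀ j, ((A.filter fun n ↦ J n = j).card : ℝ) ≤ m) :
    ∑ n ∈ A, |f (J n)| ≤ m * ‖f‖ := by
  calc ∑ n ∈ A, |f (J n)| = ∑ j ∈ A.image J, ((A.filter fun n ↦ J n = j).card : ℝ) * |f j| := by
        simp only [Finset.sum_comp (fun j ↦ |f j|) J, nsmul_eq_mul]
    _ ≤ ∑ j ∈ A.image J, m * |f j| := by gcongr with j; exact fiber j
    _ = m * ∑ j ∈ A.image J, ‖f j‖ ^ (1 : ℝ≥0∞).toReal := by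
        simp only [Finset.mul_sum, ENNReal.toReal_one, Real.rpow_one, Real.norm_eq_abs]
    _ ≤ m * ‖f‖ ^ (1 : ℝ≥0∞).toReal := by
        gcongr
        exact lp.sum_rpow_le_norm_rpow (by simp) f _
    _ = m * ‖f‖ := by rw [ENNReal.toReal_one, Real.rpow_one]

lemma IsQuasiGreedyBasis.isLowerDemocratic_one {x : ℕ → lp (fun _ : ℕ ↦ ℝ) 1}
    {φ : ℕ → StrongDual ℝ (lp (fun _ : ℕ ↦ ℝ) 1)} {C b m : ℝ} (h : IsQuasiGreedyBasis x φ C)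
    (hm : 0 < m) (peak : ∀ n, ∃ j, b ≤ |x n j|)
    (overlap : ∀ (A : Finset ℕ) j, ((A.filter fun n ↦ b ≤ |x n j|).card : ℝ) ≤ m) :
    IsLowerDemocratic x (b / (m * (2 * C))) 1 := by
  intro A ε hε
  have hC := h.pos
  choose J hJ using peak
  obtain ⟨δ, hδ, hsum⟩ := exists_sign_sum_abs_apply_le (fun n ↦ ⇑(x n)) A J
  have fiber (j : ℕ) : ((A.filter fun n ↦ J n = j).card : ℝ) ≤ m := by
    refine le_trans ?_ (overlap A j)
    gcongr with n
    rintro rfl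
    exact hJ n
  rw [inv_one, Real.rpow_one, div_mul_eq_mul_div, div_le_iff₀' (by positivity)]
  calc b * A.card = ∑ _n ∈ A, b := by rw [Finset.sum_const, nsmul_eq_mul, mul_comm]
    _ ≤ ∑ n ∈ A, |x n (J n)| := Finset.sum_le_sum fun n _ ↦ hJ n
    _ ≤ ∑ n ∈ A, |(∑ k ∈ A, δ k • x k : lp (fun _ : ℕ ↦ ℝ) 1) (J n)| := by
        simpa only [coe_lp_sum_smul] using hsum
    _ ≤ m * ‖∑ k ∈ A, δ k • x k‖ := sum_abs_comp_le _ A J hm.le fiber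
    _ ≤ m * (2 * C * ‖∑ n ∈ A, ε n • x n‖) := by
        gcongr
        exact h.norm_sum_le_of_abs_le_one hε fun n _ ↦ (hδ n).le
    _ = m * (2 * C) * ‖∑ n ∈ A, ε n • x n‖ := by ring

end Democracy

section Equivalence

open MeasureTheory
open scoped ENNReal

lemma isQuasiGreedyBasis_lpFunctional {q q' : ℝ≥0∞} [Fact (1 ≤ q)] [Fact (1 ≤ q')]
    [q.HolderConjugate q'] {N : (ℕ → ℝ) → ℝ} (hN : ∀ f : lp (fun _ : ℕ ↦ ℝ) q, N f = ‖f‖)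
    {x : ℕ → lp (fun _ : ℕ ↦ ℝ) q} {y : ℕ → lp (fun _ : ℕ ↦ ℝ) q'} {C : ℝ} (hC : 0 < C)
    (biorthogonal : ∀ m n, pairing (x n) (y m) = if m = n then 1 else 0)
    (dense : ∀ f : lp (fun _ : ℕ ↦ ℝ) q, ∀ ε > 0, ∃ (s : Finset ℕ) (c : ℕ → ℝ),
      N (fun j ↦ f j - ∑ n ∈ s, c n * x n j) < ε)
    (bounded : ∃ G, ∀ n, ‖y n‖ ≤ G)
    (greedy : ∀ f : lp (fun _ : ℕ ↦ ℝ) q, ∀ A, GreedySet (fun n ↦ pairing f (y n)) A →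
      N (fun j ↦ ∑ n ∈ A, pairing f (y n) * x n j) ≤ C * N f) :
    IsQuasiGreedyBasis x (fun n ↦ lpFunctional q (y n)) C where
  pos := hC
  biorthogonal := biorthogonal
  dense_span := dense_span_range_of_forall_exists fun f ε hε ↦ by
    obtain ⟨s, c, hsc⟩ := dense f ε hε
    refine ⟨s, c, lt_of_eq_of_lt ?_ hsc⟩
    rw [← hN, lp.coeFn_sub, coe_lp_sum_smul]
    rfl
  bounded := bounded.imp fun _ hG n ↦ (norm_lpFunctional_le _).trans (hG n)
  norm_sum_le f A hA := by
    simpa only [← hN, coe_lp_sum_smul, lpFunctional_apply] using greedy f A hA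

lemma IsQuasiGreedyBasis.count_lt_abs_pairing_le {q : ℝ≥0∞} [Fact (1 ≤ q)]
    {x : ℕ → lp (fun _ : ℕ ↦ ℝ) q} {φ : ℕ → StrongDual ℝ (lp (fun _ : ℕ ↦ ℝ) q)} {C κ : ℝ}
    (h : IsQuasiGreedyBasis x φ C) (democratic : IsLowerDemocratic x κ q.toReal) (hκ : 0 < κ)
    (hq : 0 < q.toReal)
    {g : ℕ → ℕ → ℝ} (hφ : ∀ n (f : lp (fun _ : ℕ ↦ ℝ) q), φ n f = pairing f (g n))
    {f : ℕ → ℝ} (hf : Memℓp f q) {t : ℝ} (ht : 0 < t) :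
    Measure.count {n | t < |pairing f (g n)|} ≤ ((2 * C / κ) ^ q.toReal).toNNReal *
      ∫⁻ j, ENNReal.ofReal ((|f j| / t) ^ q.toReal) ∂Measure.count := by
  have weak := h.count_lt_abs_coord_le democratic hκ hq ⟨f, hf⟩ ht
  rw [← lintegral_count_div_rpow _ hq ht] at weak
  simp only [hφ] at weak
  exact weak

lemma Mem1.indicator {f : ℕ → ℝ} (hf : Mem1 f) (S : Set ℕ) : Mem1 (S.indicator f) :=
  hf.of_nonneg_of_le (fun _ ↦ abs_nonneg _) fun j ↦ norm_indicator_le_norm_self f j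

theorem exists_normP_pairing_le {p : ℝ} (hp₁ : 1 < p) (hp₂ : p < 2)
    {x₁ : ℕ → lp (fun _ : ℕ ↦ ℝ) 1} {φ₁ : ℕ → StrongDual ℝ (lp (fun _ : ℕ ↦ ℝ) 1)} {C₁ κ₁ : ℝ}
    {x₂ : ℕ → lp (fun _ : ℕ ↦ ℝ) 2} {φ₂ : ℕ → StrongDual ℝ (lp (fun _ : ℕ ↦ ℝ) 2)} {C₂ κ₂ : ℝ}
    (h₁ : IsQuasiGreedyBasis x₁ φ₁ C₁) (h₂ : IsQuasiGreedyBasis x₂ φ₂ C₂)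
    (democratic₁ : IsLowerDemocratic x₁ κ₁ 1) (hκ₁ : 0 < κ₁)
    (democratic₂ : IsLowerDemocratic x₂ κ₂ 2) (hκ₂ : 0 < κ₂)
    {g : ℕ → ℕ → ℝ} (hφ₁ : ∀ n (f : lp (fun _ : ℕ ↦ ℝ) 1), φ₁ n f = pairing f (g n))
    (hφ₂ : ∀ n (f : lp (fun _ : ℕ ↦ ℝ) 2), φ₂ n f = pairing f (g n)) :
    ∃ K, ∀ f, Mem1 f → normP p (fun n ↦ pairing f (g n)) ≤ K * normP p f := by
  refine ⟨_, fun f hf ↦ normP_le_of_lintegral_le (zero_lt_one.trans hp₁)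
    (marcinkiewiczConst_ne_top p 1 2 ((2 * C₁ / κ₁) ^ (1 : ℝ)).toNNReal
      ((2 * C₂ / κ₂) ^ (2 : ℝ)).toNNReal) (hf.summable_rpow hp₁.le) ?_⟩
  have mem₁ (S : Set ℕ) : Memℓp (S.indicator f) 1 := mem1_iff_memℓp.1 (hf.indicator S)
  refine lintegral_rpow_abs_le_of_weak_type (T := fun f n ↦ pairing f (g n)) one_pos hp₁ hp₂
    (measurable_of_countable f) (measurable_of_countable _).aemeasurable ?_ ?_ ?_
  · intro S _ n
    have split := (φ₁ n).map_add ⟨_, mem₁ S⟩ ⟨_, mem₁ Sᶜ⟩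
    simp only [hφ₁, lp.coeFn_add, Set.indicator_self_add_compl] at split
    rw [split]
    exact abs_add_le _ _
  · intro S _ t ht
    simpa only [ENNReal.toReal_one] using h₁.count_lt_abs_pairing_le
      (by simpa using democratic₁) hκ₁ (by simp) hφ₁ (mem₁ S) ht
  · intro S _ t ht _
    simpa only [ENNReal.toReal_ofNat] using h₂.count_lt_abs_pairing_le
      (by simpa using democratic₂) hκ₂ (by simp) hφ₂ ((mem₁ S).of_exponent_ge one_le_two) ht

lemma count_lt_abs_le_of_norm_div_rpow_le {q : ℝ≥0∞} (F : lp (fun _ : ℕ ↦ ℝ) q)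
    (hq : 0 < q.toReal) {s : Finset ℕ} {a : ℕ → ℝ} {K r t : ℝ} (hK : 0 ≤ K) (ht : 0 < t)
    (h : (‖F‖ / t) ^ q.toReal ≤ K * ∑ n ∈ s, (|a n| / t) ^ r) :
    Measure.count {j | t < |F j|} ≤
      K.toNNReal * ∫⁻ n, ENNReal.ofReal ((|a n| / t) ^ r) ∂Measure.count :=
  calc Measure.count {j | t < |F j|} ≤ ENNReal.ofReal ((‖F‖ / t) ^ q.toReal) :=
        count_lt_abs_apply_le F hq ht
    _ ≤ ENNReal.ofReal (K * ∑ n ∈ s, (|a n| / t) ^ r) := ENNReal.ofReal_le_ofReal h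
    _ = K.toNNReal * ∑ n ∈ s, ENNReal.ofReal ((|a n| / t) ^ r) := by
        rw [ENNReal.ofReal_mul hK, ENNReal.ofReal_sum_of_nonneg fun n _ ↦ by positivity]
        rfl
    _ ≤ K.toNNReal * ∫⁻ n, ENNReal.ofReal ((|a n| / t) ^ r) ∂Measure.count := by
        rw [lintegral_count]
        gcongr
        exact ENNReal.sum_le_tsum s

lemma count_lt_abs_sum_le_of_norm_le {x : ℕ → lp (fun _ : ℕ ↦ ℝ) 1} {D : ℝ}
    (hD : ∀ n, ‖x n‖ ≤ D) (s : Finset ℕ) (a : ℕ → ℝ) {t : ℝ} (ht : 0 < t) :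
    Measure.count {j | t < |∑ n ∈ s, a n * x n j|} ≤
      D.toNNReal * ∫⁻ n, ENNReal.ofReal ((|a n| / t) ^ (1 : ℝ)) ∂Measure.count := by
  have norm_le : ‖∑ n ∈ s, a n • x n‖ ≤ D * ∑ n ∈ s, |a n| := by
    rw [Finset.mul_sum]
    refine norm_sum_le_of_le s fun n _ ↦ ?_
    rw [norm_smul, mul_comm, Real.norm_eq_abs]
    gcongr
    exact hD n
  have weak := count_lt_abs_le_of_norm_div_rpow_le (∑ n ∈ s, a n • x n) (by simp) (s := s)
    (a := a) (r := 1) ((norm_nonneg _).trans (hD 0)) ht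
  simp only [coe_lp_sum_smul] at weak
  refine weak ?_
  simp only [ENNReal.toReal_one, Real.rpow_one, ← Finset.sum_div, ← mul_div_assoc]
  gcongr

lemma IsUpperDemocratic.count_lt_abs_sum_le {q : ℝ≥0∞} [Fact (1 ≤ q)]
    {x : ℕ → lp (fun _ : ℕ ↦ ℝ) q} {K r : ℝ} (h : IsUpperDemocratic x K q.toReal) (hK : 0 ≤ K)
    (hr : 0 ≤ r) (hrq : r < q.toReal) (s : Finset ℕ) {a : ℕ → ℝ} {t : ℝ} (ht : 0 < t)
    (hat : ∀ n, |a n| ≤ t) :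
    Measure.count {j | t < |∑ n ∈ s, a n * x n j|} ≤
      ((K / (1 - r / q.toReal)) ^ q.toReal).toNNReal *
        ∫⁻ n, ENNReal.ofReal ((|a n| / t) ^ r) ∂Measure.count := by
  have hq : 0 < q.toReal := hr.trans_lt hrq
  have const_nonneg : 0 ≤ K / (1 - r / q.toReal) :=
    div_nonneg hK (sub_nonneg.2 ((div_le_one hq).2 hrq.le))
  have abs_div_t (n : ℕ) : |a n / t| = |a n| / t := by rw [abs_div, abs_of_pos ht]
  have norm_le : ‖∑ n ∈ s, a n • x n‖ / t ≤
      K / (1 - r / q.toReal) * (∑ n ∈ s, (|a n| / t) ^ r) ^ q.toReal⁻¹ :=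
    calc ‖∑ n ∈ s, a n • x n‖ / t = ‖∑ n ∈ s, (a n / t) • x n‖ := by
          simp only [div_eq_inv_mul, mul_smul, ← Finset.smul_sum, norm_smul, norm_inv,
            Real.norm_of_nonneg ht.le]
      _ ≤ K / (1 - r / q.toReal) * (∑ n ∈ s, |a n / t| ^ r) ^ q.toReal⁻¹ :=
          h.norm_sum_le hK hr hrq fun n _ ↦ by rw [abs_div_t]; exact (div_le_one ht).2 (hat n)
      _ = K / (1 - r / q.toReal) * (∑ n ∈ s, (|a n| / t) ^ r) ^ q.toReal⁻¹ := by
          simp only [abs_div_t]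
  have weak := count_lt_abs_le_of_norm_div_rpow_le (∑ n ∈ s, a n • x n) hq (s := s) (a := a)
    (r := r) (Real.rpow_nonneg const_nonneg q.toReal) ht
  simp only [coe_lp_sum_smul] at weak
  refine weak ((Real.rpow_le_rpow (by positivity) norm_le hq.le).trans_eq ?_)
  rw [Real.mul_rpow const_nonneg (by positivity), Real.rpow_inv_rpow (by positivity) hq.ne']

theorem exists_normP_sum_le {p : ℝ} (hp₁ : 1 < p) (hp₂ : p < 2)
    {x₁ : ℕ → lp (fun _ : ℕ ↦ ℝ) 1} {x₂ : ℕ → lp (fun _ : ℕ ↦ ℝ) 2} {D K : ℝ}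
    (hx : ∀ n, ⇑(x₁ n) = ⇑(x₂ n)) (hD : ∀ n, ‖x₁ n‖ ≤ D) (hK : 0 ≤ K)
    (democratic : IsUpperDemocratic x₂ K 2) :
    ∃ K', ∀ (s : Finset ℕ) (a : ℕ → ℝ), (∀ n ∉ s, a n = 0) →
      normP p (fun j ↦ ∑ n ∈ s, a n * x₁ n j) ≤ K' * normP p a := by
  refine ⟨_, fun s a ha ↦ normP_le_of_lintegral_le (zero_lt_one.trans hp₁)
    (marcinkiewiczConst_ne_top p 1 ((p + 2) / 2) D.toNNReal
      ((K / (1 - (p + 2) / 2 / 2)) ^ (2 : ℝ)).toNNReal)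
    (summable_of_ne_finset_zero (s := s) fun n hn ↦ by
      rw [ha n hn, abs_zero, Real.zero_rpow (by linarith)]) ?_⟩
  refine lintegral_rpow_abs_le_of_weak_type (T := fun a j ↦ ∑ n ∈ s, a n * x₁ n j) one_pos hp₁
    (by linarith) (measurable_of_countable a) (measurable_of_countable _).aemeasurable ?_ ?_ ?_
  · intro S _ j
    refine le_of_eq_of_le (congrArg _ ?_) (abs_add_le _ _)
    simp only [← Finset.sum_add_distrib, ← add_mul, Set.indicator_self_add_compl_apply]
  · exact fun S _ t ht ↦ count_lt_abs_sum_le_of_norm_le hD s _ ht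
  · simp only [hx]
    intro S _ t ht hat
    have democratic' : IsUpperDemocratic x₂ K (2 : ℝ≥0∞).toReal := by
      rwa [ENNReal.toReal_ofNat]
    have weak := democratic'.count_lt_abs_sum_le hK (r := (p + 2) / 2) (by linarith)
      (by rw [ENNReal.toReal_ofNat]; linarith) s ht hat
    rwa [ENNReal.toReal_ofNat] at weak

lemma normP_nonneg (p : ℝ) (f : ℕ → ℝ) : 0 ≤ normP p f :=
  Real.rpow_nonneg (tsum_nonneg fun _ ↦ by positivity) _

section PairOfBases

variable {x₁ : ℕ → lp (fun _ : ℕ ↦ ℝ) 1} {φ₁ : ℕ → StrongDual ℝ (lp (fun _ : ℕ ↦ ℝ) 1)}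
  {x₂ : ℕ → lp (fun _ : ℕ ↦ ℝ) 2} {φ₂ : ℕ → StrongDual ℝ (lp (fun _ : ℕ ↦ ℝ) 2)}
  {C₁ C₂ D₁ D₂ c : ℝ}

lemma exists_isLowerDemocratic_one (h₁ : IsQuasiGreedyBasis x₁ φ₁ C₁)
    (h₂ : IsQuasiGreedyBasis x₂ φ₂ C₂) (hx : ∀ n, ⇑(x₁ n) = ⇑(x₂ n)) (hD₁ : ∀ n, ‖x₁ n‖ ≤ D₁)
    (hD₂ : ∀ n, ‖x₂ n‖ ≤ D₂) (hc : 0 < c) (hxc : ∀ n, c ≤ ‖x₂ n‖) :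
    ∃ κ > 0, IsLowerDemocratic x₁ κ 1 := by
  have hC₁ := h₁.pos
  have hC₂ := h₂.pos
  have hD₁0 : 0 ≤ D₁ := (norm_nonneg _).trans (hD₁ 0)
  have hD₂0 : 0 < D₂ := hc.trans_le ((hxc 0).trans (hD₂ 0))
  set b := c ^ 2 / (D₁ + 1)
  have hb : 0 < b := by positivity
  set m := (2 * C₂ * D₂ / b) ^ (2 : ℝ)
  have peak (n) : ∃ j, b ≤ |x₁ n j| :=
    exists_le_abs_apply (mem1_iff_memℓp.2 (lp.memℓp (x₁ n))) hc
      (by rw [hx, norm2_eq_norm]; exact hxc n) (by rw [norm1_eq_norm]; exact hD₁ n)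
  have overlap (A : Finset ℕ) (j) : ((A.filter fun n ↦ b ≤ |x₁ n j|).card : ℝ) ≤ m := by
    simp only [hx]
    exact (h₂.isUpperDemocratic_two hD₂).card_filter_le_abs_apply_le (by positivity) .two_two hb A j
  exact ⟨b / (m * (2 * C₁)), by positivity, h₁.isLowerDemocratic_one (by positivity) peak overlap⟩

theorem exists_normP_equiv {p : ℝ} (hp₁ : 1 < p) (hp₂ : p < 2) (h₁ : IsQuasiGreedyBasis x₁ φ₁ C₁)
    (h₂ : IsQuasiGreedyBasis x₂ φ₂ C₂) (hx : ∀ n, ⇑(x₁ n) = ⇑(x₂ n)) (hD₁ : ∀ n, ‖x₁ n‖ ≤ D₁)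
    (hD₂ : ∀ n, ‖x₂ n‖ ≤ D₂) (hc : 0 < c) (hxc : ∀ n, c ≤ ‖x₂ n‖) {g : ℕ → ℕ → ℝ}
    (hφ₁ : ∀ n (f : lp (fun _ : ℕ ↦ ℝ) 1), φ₁ n f = pairing f (g n))
    (hφ₂ : ∀ n (f : lp (fun _ : ℕ ↦ ℝ) 2), φ₂ n f = pairing f (g n)) :
    ∃ c' C', 0 < c' ∧ c' ≤ C' ∧ ∀ (s : Finset ℕ) (a : ℕ → ℝ), (∀ n ∉ s, a n = 0) →
      c' * normP p a ≤ normP p (fun j ↦ ∑ n ∈ s, a n * x₁ n j) ∧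
        normP p (fun j ↦ ∑ n ∈ s, a n * x₁ n j) ≤ C' * normP p a := by
  have hC₂ := h₂.pos
  have hD₂0 : 0 ≤ D₂ := (norm_nonneg _).trans (hD₂ 0)
  obtain ⟨κ, hκ, democratic⟩ := exists_isLowerDemocratic_one h₁ h₂ hx hD₁ hD₂ hc hxc
  obtain ⟨K, lower⟩ := exists_normP_pairing_le hp₁ hp₂ h₁ h₂ democratic hκ
    (h₂.isLowerDemocratic_two hc.le hxc) (by positivity) hφ₁ hφ₂
  obtain ⟨K', upper⟩ := exists_normP_sum_le hp₁ hp₂ hx hD₁ (by positivity)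
    (h₂.isUpperDemocratic_two hD₂)
  have hM : 0 < max K 1 := by positivity
  refine ⟨(max K 1)⁻¹, max K' (max K 1)⁻¹, by positivity, le_max_right _ _, fun s a ha ↦ ⟨?_, ?_⟩⟩
  · have coord (n : ℕ) : pairing (fun j ↦ ∑ n ∈ s, a n * x₁ n j) (g n) = a n := by
      rw [← coe_lp_sum_smul, ← hφ₁, h₁.coord_sum]
      exact ite_eq_left_iff.2 fun hn ↦ (ha n hn).symm
    have bound := lower _ (mem1_iff_memℓp.2 (coe_lp_sum_smul s a x₁ ▸ lp.memℓp _))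
    simp only [coord] at bound
    rw [inv_mul_le_iff₀ hM]
    exact bound.trans (by gcongr; exacts [normP_nonneg _ _, le_max_left _ _])
  · exact (upper s a ha).trans (by gcongr; exacts [normP_nonneg _ _, le_max_left _ _])

end PairOfBases

end Equivalence

/-- A system which is simultaneously a quasi-greedy basis of `ℓ_1` and of `ℓ_2`
is equivalent, in `ℓ_p` for every `1 < p < 2`, to the canonical `ℓ_p` basis. -/
theorem stmt14 (x g : ℕ → ℕ → ℝ)
    (hx1 : ∀ n, Mem1 (x n)) (hx2 : ∀ n, Mem2 (x n))
    (hg2 : ∀ n, Mem2 (g n))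
    (hbiorth : ∀ m n, pairing (x n) (g m) = if m = n then (1 : ℝ) else 0)
    (hdense1 : ∀ f, Mem1 f → ∀ ε > 0, ∃ (s : Finset ℕ) (c : ℕ → ℝ),
      norm1 (fun j => f j - ∑ n ∈ s, c n * x n j) < ε)
    (hdense2 : ∀ f, Mem2 f → ∀ ε > 0, ∃ (s : Finset ℕ) (c : ℕ → ℝ),
      norm2 (fun j => f j - ∑ n ∈ s, c n * x n j) < ε)
    (hx1lb : ∃ c > 0, ∀ n, c ≤ norm1 (x n)) (hx1ub : ∃ C : ℝ, ∀ n, norm1 (x n) ≤ C)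
    (hx2lb : ∃ c > 0, ∀ n, c ≤ norm2 (x n)) (hx2ub : ∃ C : ℝ, ∀ n, norm2 (x n) ≤ C)
    (hginf : ∃ G : ℝ, ∀ n j, |g n j| ≤ G) (hg2ub : ∃ G : ℝ, ∀ n, norm2 (g n) ≤ G)
    (hqg : ∃ C₀ ≥ (1 : ℝ),
      (∀ f, Mem1 f → ∀ A : Finset ℕ, GreedySet (fun n => pairing f (g n)) A →
        norm1 (fun j => ∑ n ∈ A, pairing f (g n) * x n j) ≤ C₀ * norm1 f) ∧
      (∀ f, Mem2 f → ∀ A : Finset ℕ, GreedySet (fun n => pairing f (g n)) A →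
        norm2 (fun j => ∑ n ∈ A, pairing f (g n) * x n j) ≤ C₀ * norm2 f)) :
    ∀ p : ℝ, 1 < p → p < 2 →
      ∃ c C : ℝ, 0 < c ∧ c ≤ C ∧
        ∀ (s : Finset ℕ) (a : ℕ → ℝ), (∀ n ∉ s, a n = 0) →
          c * (∑ n ∈ s, |a n| ^ p) ^ (1 / p)
              ≤ normP p (fun j => ∑ n ∈ s, a n * x n j) ∧
          normP p (fun j => ∑ n ∈ s, a n * x n j)
              ≤ C * (∑ n ∈ s, |a n| ^ p) ^ (1 / p) := by
  intro p hp₁ hp₂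
  obtain ⟨D₁, hD₁⟩ := hx1ub
  obtain ⟨D₂, hD₂⟩ := hx2ub
  obtain ⟨c, hc, hxc⟩ := hx2lb
  obtain ⟨G, hG⟩ := hginf
  obtain ⟨C₀, hC₀, greedy₁, greedy₂⟩ := hqg
  let x₁ n : lp (fun _ : ℕ ↦ ℝ) 1 := ⟨x n, mem1_iff_memℓp.1 (hx1 n)⟩
  let x₂ n : lp (fun _ : ℕ ↦ ℝ) 2 := ⟨x n, mem2_iff_memℓp.1 (hx2 n)⟩
  let g₁ n : lp (fun _ : ℕ ↦ ℝ) ⊤ := ⟨g n, memℓp_infty ⟨G, Set.forall_mem_range.2 (hG n)⟩⟩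
  let g₂ n : lp (fun _ : ℕ ↦ ℝ) 2 := ⟨g n, mem2_iff_memℓp.1 (hg2 n)⟩
  have basis₁ := isQuasiGreedyBasis_lpFunctional norm1_eq_norm (x := x₁) (y := g₁)
    (zero_lt_one.trans_le hC₀) hbiorth (fun f ↦ hdense1 f (mem1_iff_memℓp.2 (lp.memℓp f)))
    ⟨G, fun n ↦ lp.norm_le_of_forall_le' G (hG n)⟩
    fun f ↦ greedy₁ f (mem1_iff_memℓp.2 (lp.memℓp f))
  have basis₂ := isQuasiGreedyBasis_lpFunctional norm2_eq_norm (x := x₂) (y := g₂)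
    (zero_lt_one.trans_le hC₀) hbiorth (fun f ↦ hdense2 f (mem2_iff_memℓp.2 (lp.memℓp f)))
    (by simpa only [← norm2_eq_norm] using hg2ub)
    fun f ↦ greedy₂ f (mem2_iff_memℓp.2 (lp.memℓp f))
  obtain ⟨c', C', hc', hcC, equiv⟩ := exists_normP_equiv hp₁ hp₂ basis₁ basis₂ (fun _ ↦ rfl)
    (by simpa only [← norm1_eq_norm] using hD₁) (by simpa only [← norm2_eq_norm] using hD₂) hc
    (by simpa only [← norm2_eq_norm] using hxc) (fun _ _ ↦ rfl) fun _ _ ↦ rfl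
  exact ⟨c', C', hc', hcC, fun s a ha ↦
    normP_eq_sum (zero_lt_one.trans hp₁).ne' ha ▸ equiv s a ha⟩
end
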